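/- arXiv:2411.11634 — 3 statements merged into one kernel-verified Lean document; each statement's English description precedes it below -/
import Mathlib

section
/- Let A ∈ M_n(ℤ) be non-singular and let T ∈ M_n(ℚ). Then T·x ∈ G_A for every x ∈ G_A if and only if every entry of T lies in ℤ[1/det A] and, for every prime p ∈ P'(A), the matrix T (viewed as a matrix over ℚ_p) maps Ḡ_{A,p} into Ḡ_{A,p}. -/
open Matrix Polynomial

noncomputable section

/-- The matrix `A` viewed over `ℚ`. -/
def Aq {n : ℕ} (A : Matrix (Fin n) (Fin n) ℤ) : Matrix (Fin n) (Fin n) ℚ :=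
  A.map (Int.cast : ℤ → ℚ)

/-- The group `G_A = {A^k x : x ∈ ℤ^n, k ∈ ℤ} ⊆ ℚ^n`. -/
def GA {n : ℕ} (A : Matrix (Fin n) (Fin n) ℤ) : Set (Fin n → ℚ) :=
  {v | ∃ (k : ℤ) (x : Fin n → ℤ), v = (Aq A ^ k) *ᵥ fun i => ((x i : ℚ))}

/-- The ring `ℤ[1 / det A] ⊆ ℚ`. -/
def Rdet {n : ℕ} (A : Matrix (Fin n) (Fin n) ℤ) : Set ℚ :=
  {r | ∃ (a : ℤ) (l : ℕ), r = (a : ℚ) / ((A.det : ℚ)) ^ l}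

/-- `P'(A)`: primes dividing `det A` such that `h_A ≢ x^n (mod p)`. -/
def Pbad {n : ℕ} (A : Matrix (Fin n) (Fin n) ℤ) : Set ℕ :=
  {p | p.Prime ∧ (p : ℤ) ∣ A.det ∧ A.charpoly.map (Int.castRingHom (ZMod p)) ≠ X ^ n}

/-- `Ḡ_{A,p} = {A^k x : x ∈ ℤ_p^n, k ∈ ℤ} ⊆ ℚ_p^n`. -/
def GAp {n : ℕ} (A : Matrix (Fin n) (Fin n) ℤ) (p : ℕ) [Fact p.Prime] :
    Set (Fin n → ℚ_[p]) :=
  {v | ∃ (k : ℤ) (x : Fin n → ℤ_[p]),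
    v = ((A.map (Int.cast : ℤ → ℚ_[p])) ^ k) *ᵥ fun i => ((x i : ℚ_[p]))}

/-!
Clearing the negative powers, `G_A` consists of the rational vectors `v` with `A^m v` integral for
some `m`, and `Ḡ_{A,p}` is described in the same way over `ℤ_p`. Since both are spanned by the
columns of the matrices `A^{-m}`, `Ḡ_{A,p}` is the `ℤ_p`-span of `G_A`. Conversely, a rational
vector lying in every `Ḡ_{A,p}` lies in `G_A`: only the finitely many `p ∣ det A` need a positive
exponent, and a rational number integral at every prime is an integer.
Hence `T` preserves `G_A` if and only if it preserves every `Ḡ_{A,p}`.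

If `p ∤ det A`, then `Ḡ_{A,p} = ℤ_p^n`, which is preserved as soon as the entries of `T` lie in
`ℤ[1/det A] ⊆ ℤ_p`. If `h_A ≡ x^n (mod p)`, then `p` divides `A^n` by Cayley-Hamilton, so
`Ḡ_{A,p} = ℚ_p^n` and there is no condition. What is left are the primes of `P'(A)`. The entries of
`T` lie in `ℤ[1/det A]` when `T` preserves `G_A` because the adjugate of `A^m` turns integrality of
`A^m T e_j` into integrality of `(det A)^m T e_j`.
-/

open IsLocalization

section EventuallyIntegral

variable {R K S L ι κ : Type*} [CommRing R] [CommRing K] [CommRing S] [CommRing L]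
  [Algebra R K] [Algebra S L]

theorem isInteger_of_isInteger_smul {c : R} (hc : IsUnit c) {a : K}
    (ha : IsInteger R (c • a)) : IsInteger R a := by
  obtain ⟨u, rfl⟩ := hc
  have : IsInteger R ((↑u⁻¹ : R) • (u : R) • a) := isInteger_smul ha
  rwa [smul_smul, Units.inv_mul, one_smul] at this

section BaseChange

variable [Algebra R S] [Algebra K L] [Algebra R L] [IsScalarTower R S L] [IsScalarTower R K L]

theorem isInteger_algebraMap_of_isInteger {a : K} (ha : IsInteger R a) :
    IsInteger S (algebraMap K L a) := by
  obtain ⟨r, rfl⟩ := ha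
  exact ⟨algebraMap R S r, by simp only [← IsScalarTower.algebraMap_apply]⟩

theorem map_map_algebraMap_comm (B : Matrix κ ι R) :
    (B.map (algebraMap R S)).map (algebraMap S L) =
      (B.map (algebraMap R K)).map (algebraMap K L) := by
  ext i j
  simp only [Matrix.map_apply, ← IsScalarTower.algebraMap_apply]

end BaseChange

theorem map_smul_algebraMap (c : R) (B : Matrix κ ι R) :
    (c • B).map (algebraMap R K) = c • B.map (algebraMap R K) :=
  Matrix.map_smul _ c (fun b => by rw [smul_eq_mul, map_mul, Algebra.smul_def]) B

variable (R K ι) in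
/-- The standard lattice `R^ι` inside `K^ι`: the vectors all of whose coordinates lie in the image
of `R`. -/
def integralVectors : Submodule R (ι → K) where
  carrier := {v | ∀ i, IsInteger R (v i)}
  add_mem' hv hw i := isInteger_add (hv i) (hw i)
  zero_mem' _ := ⟨0, map_zero _⟩
  smul_mem' _ _ hv i := isInteger_smul (hv i)

theorem mem_integralVectors_iff_exists {v : ι → K} :
    v ∈ integralVectors R K ι ↔ ∃ x : ι → R, algebraMap R K ∘ x = v := by
  refine ⟨fun hv => ?_, ?_⟩
  · choose x hx using hv
    exact ⟨x, funext hx⟩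
  · rintro ⟨x, rfl⟩ i
    exact ⟨x i, rfl⟩

theorem single_one_mem_integralVectors [DecidableEq ι] (j : ι) :
    Pi.single j 1 ∈ integralVectors R K ι :=
  mem_integralVectors_iff_exists.2 ⟨Pi.single j 1, funext fun i => by
    rw [Function.comp_apply, Pi.apply_single (fun _ => algebraMap R K) (fun _ => map_zero _),
      map_one]⟩

theorem exists_smul_mem_integralVectors [Finite ι] [IsDomain R] [IsDiscreteValuationRing R]
    [IsFractionRing R K] {ϖ : R} (hϖ : Irreducible ϖ) (v : ι → K) :
    ∃ k : ℕ, ϖ ^ k • v ∈ integralVectors R K ι := by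
  obtain ⟨⟨b, hb⟩, hbv⟩ := exist_integer_multiples_of_finite (nonZeroDivisors R) v
  obtain ⟨k, hk⟩ := IsDiscreteValuationRing.associated_pow_irreducible
    (nonZeroDivisors.ne_zero hb) hϖ
  obtain ⟨c, hc⟩ := hk.dvd
  refine ⟨k, ?_⟩
  rw [hc, mul_comm, mul_smul]
  exact Submodule.smul_mem _ c hbv

variable [Fintype ι]

theorem algebraMap_comp_mulVec (M : Matrix κ ι R) (v : ι → R) :
    algebraMap R K ∘ (M *ᵥ v) = M.map (algebraMap R K) *ᵥ (algebraMap R K ∘ v) :=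
  funext fun i => RingHom.map_mulVec (algebraMap R K) M v i

theorem mulVec_mem_integralVectors {M : Matrix κ ι K} (hM : ∀ i j, IsInteger R (M i j))
    {v : ι → K} (hv : v ∈ integralVectors R K ι) : M *ᵥ v ∈ integralVectors R K κ :=
  fun i => (algebraMap R K).rangeS.sum_mem fun j _ => isInteger_mul (hM i j) (hv j)

theorem map_mulVec_mem_integralVectors (B : Matrix κ ι R) {v : ι → K}
    (hv : v ∈ integralVectors R K ι) : B.map (algebraMap R K) *ᵥ v ∈ integralVectors R K κ :=
  mulVec_mem_integralVectors (fun i j => ⟨B i j, rfl⟩) hv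

variable [DecidableEq ι]

theorem pow_mulVec_mem_integralVectors_of_le {A : Matrix ι ι R} {v : ι → K} {m k : ℕ}
    (hmk : m ≤ k) (hv : (A ^ m).map (algebraMap R K) *ᵥ v ∈ integralVectors R K ι) :
    (A ^ k).map (algebraMap R K) *ᵥ v ∈ integralVectors R K ι := by
  rw [← Nat.sub_add_cancel hmk, pow_add, Matrix.map_mul, ← mulVec_mulVec]
  exact map_mulVec_mem_integralVectors _ hv

variable (K) in
/-- The ascending union of the `R`-modules `A⁻ᵐ(R^ι)` inside `K^ι`, i.e. the vectors that some power
of `A` makes integral. For `R = ℤ` this is `G_A` and for `R = ℤ_p` it is `Ḡ_{A,p}`; avoiding `A⁻¹`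
makes sense of it over an arbitrary ring. -/
def eventuallyIntegral (A : Matrix ι ι R) : Submodule R (ι → K) where
  carrier := {v | ∃ m : ℕ, (A ^ m).map (algebraMap R K) *ᵥ v ∈ integralVectors R K ι}
  add_mem' := by
    rintro v w ⟨a, ha⟩ ⟨b, hb⟩
    refine ⟨max a b, ?_⟩
    rw [mulVec_add]
    exact add_mem (pow_mulVec_mem_integralVectors_of_le (le_max_left a b) ha)
      (pow_mulVec_mem_integralVectors_of_le (le_max_right a b) hb)
  zero_mem' := ⟨0, by rw [mulVec_zero]; exact zero_mem _⟩
  smul_mem' := by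
    rintro c v ⟨m, hm⟩
    refine ⟨m, ?_⟩
    rw [mulVec_smul]
    exact Submodule.smul_mem _ c hm

theorem integralVectors_le_eventuallyIntegral (A : Matrix ι ι R) :
    integralVectors R K ι ≤ eventuallyIntegral K A :=
  fun _ hv => ⟨0, map_mulVec_mem_integralVectors _ hv⟩

theorem isUnit_pow_map_algebraMap {A : Matrix ι ι R} (hA : IsUnit (algebraMap R K A.det)) (m : ℕ) :
    IsUnit ((A ^ m).map (algebraMap R K)) := by
  rw [isUnit_iff_isUnit_det, ← RingHom.mapMatrix_apply, ← RingHom.map_det, det_pow, map_pow]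
  exact hA.pow m

theorem mem_eventuallyIntegral_iff_exists_zpow {A : Matrix ι ι R}
    (hA : IsUnit (algebraMap R K A.det)) {v : ι → K} :
    v ∈ eventuallyIntegral K A ↔
      ∃ (k : ℤ) (x : ι → R), v = A.map (algebraMap R K) ^ k *ᵥ (algebraMap R K ∘ x) := by
  have hdet (m : ℕ) : IsUnit (A.map (algebraMap R K) ^ m).det := by
    rw [← isUnit_iff_isUnit_det, ← Matrix.map_pow]
    exact isUnit_pow_map_algebraMap hA m
  constructor
  · rintro ⟨m, hm⟩
    obtain ⟨x, hx⟩ := mem_integralVectors_iff_exists.1 hm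
    refine ⟨-m, x, ?_⟩
    rw [hx, Matrix.map_pow, Matrix.zpow_neg_natCast, mulVec_mulVec, nonsing_inv_mul _ (hdet m),
      one_mulVec]
  · rintro ⟨k, x, rfl⟩
    have hx : algebraMap R K ∘ x ∈ integralVectors R K ι :=
      mem_integralVectors_iff_exists.2 ⟨x, rfl⟩
    obtain ⟨m, rfl | rfl⟩ := k.eq_nat_or_neg
    · rw [zpow_natCast, ← Matrix.map_pow]
      exact integralVectors_le_eventuallyIntegral A (map_mulVec_mem_integralVectors _ hx)
    · refine ⟨m, ?_⟩
      rwa [Matrix.map_pow, Matrix.zpow_neg_natCast, mulVec_mulVec, mul_nonsing_inv _ (hdet m),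
        one_mulVec]

theorem det_pow_smul_mem_integralVectors {A : Matrix ι ι R} {v : ι → K} {m : ℕ}
    (hv : (A ^ m).map (algebraMap R K) *ᵥ v ∈ integralVectors R K ι) :
    A.det ^ m • v ∈ integralVectors R K ι := by
  have hadj : (A ^ m).adjugate.map (algebraMap R K) * (A ^ m).map (algebraMap R K) =
      A.det ^ m • (1 : Matrix ι ι K) := by
    rw [← Matrix.map_mul, adjugate_mul, det_pow, map_smul_algebraMap,
      Matrix.map_one _ (map_zero _) (map_one _)]
  have := map_mulVec_mem_integralVectors (A ^ m).adjugate hv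
  rwa [mulVec_mulVec, hadj, smul_mulVec, one_mulVec] at this

theorem eventuallyIntegral_eq_integralVectors_of_isUnit_det {A : Matrix ι ι R} (hA : IsUnit A.det) :
    eventuallyIntegral K A = integralVectors R K ι := by
  refine le_antisymm ?_ (integralVectors_le_eventuallyIntegral A)
  rintro v ⟨m, hm⟩ i
  exact isInteger_of_isInteger_smul (hA.pow m) (det_pow_smul_mem_integralVectors hm i)

theorem exists_isInteger_det_pow_smul {A : Matrix ι ι R} {T : Matrix ι ι K}
    (hT : ∀ v ∈ eventuallyIntegral K A, T *ᵥ v ∈ eventuallyIntegral K A) (i j : ι) :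
    ∃ m : ℕ, IsInteger R (A.det ^ m • T i j) := by
  obtain ⟨m, hm⟩ := hT _ (integralVectors_le_eventuallyIntegral A
    (single_one_mem_integralVectors j))
  rw [mulVec_single_one] at hm
  exact ⟨m, det_pow_smul_mem_integralVectors hm i⟩

section BaseChange

variable [Algebra R S] [Algebra K L] [Algebra R L] [IsScalarTower R S L] [IsScalarTower R K L]

theorem pow_baseChange_mulVec (A : Matrix ι ι R) (m : ℕ) (v : ι → K) :
    ((A.map (algebraMap R S)) ^ m).map (algebraMap S L) *ᵥ (algebraMap K L ∘ v) =
      algebraMap K L ∘ ((A ^ m).map (algebraMap R K) *ᵥ v) := by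
  rw [← Matrix.map_pow, map_map_algebraMap_comm (K := K), algebraMap_comp_mulVec]

variable (S L) in
theorem comp_algebraMap_mem_eventuallyIntegral {A : Matrix ι ι R} {v : ι → K}
    (hv : v ∈ eventuallyIntegral K A) :
    algebraMap K L ∘ v ∈ eventuallyIntegral L (A.map (algebraMap R S)) := by
  obtain ⟨m, hm⟩ := hv
  refine ⟨m, ?_⟩
  rw [pow_baseChange_mulVec]
  exact fun i => isInteger_algebraMap_of_isInteger (hm i)

theorem eventuallyIntegral_map_eq_span {A : Matrix ι ι R} (hA : IsUnit (algebraMap R K A.det)) :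
    eventuallyIntegral L (A.map (algebraMap R S)) =
      Submodule.span S ((algebraMap K L ∘ ·) '' (eventuallyIntegral K A : Set (ι → K))) := by
  refine le_antisymm ?_ (Submodule.span_le.2 (Set.image_subset_iff.2 fun v hv =>
    comp_algebraMap_mem_eventuallyIntegral S L hv))
  rintro v ⟨m, hm⟩
  obtain ⟨x, hx⟩ := mem_integralVectors_iff_exists.1 hm
  obtain ⟨B, hAB, hBA⟩ := isUnit_iff_exists.1 (isUnit_pow_map_algebraMap hA m)
  have hcol (j : ι) : B.col j ∈ eventuallyIntegral K A := by
    refine ⟨m, ?_⟩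
    rw [← mulVec_single_one, mulVec_mulVec, hAB, one_mulVec]
    exact single_one_mem_integralVectors j
  have hv : v = ∑ j, x j • (algebraMap K L ∘ B.col j) := by
    calc v = B.map (algebraMap K L) *ᵥ (algebraMap S L ∘ x) := by
          rw [hx, ← Matrix.map_pow, map_map_algebraMap_comm (K := K), mulVec_mulVec,
            ← Matrix.map_mul, hBA, Matrix.map_one _ (map_zero _) (map_one _), one_mulVec]
      _ = ∑ j, x j • (algebraMap K L ∘ B.col j) := by
          ext i
          simp [mulVec, dotProduct, Algebra.smul_def, mul_comm]
  rw [hv]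
  exact sum_mem fun j _ => Submodule.smul_mem _ _ (Submodule.subset_span ⟨_, hcol j, rfl⟩)

theorem map_mulVec_mem_eventuallyIntegral_map {A : Matrix ι ι R}
    (hA : IsUnit (algebraMap R K A.det)) {T : Matrix ι ι K}
    (hT : ∀ v ∈ eventuallyIntegral K A, T *ᵥ v ∈ eventuallyIntegral K A) {v : ι → L}
    (hv : v ∈ eventuallyIntegral L (A.map (algebraMap R S))) :
    T.map (algebraMap K L) *ᵥ v ∈ eventuallyIntegral L (A.map (algebraMap R S)) := by
  rw [eventuallyIntegral_map_eq_span hA] at hv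
  induction hv using Submodule.span_induction with
  | mem _ hw =>
    obtain ⟨w, hw, rfl⟩ := hw
    rw [← algebraMap_comp_mulVec]
    exact comp_algebraMap_mem_eventuallyIntegral S L (hT w hw)
  | zero => rw [mulVec_zero]; exact zero_mem _
  | add _ _ _ _ hu hw => rw [mulVec_add]; exact add_mem hu hw
  | smul c _ _ hw => rw [mulVec_smul]; exact Submodule.smul_mem _ c hw

end BaseChange

theorem map_pow_card_eq_zero_of_charpoly_map {A : Matrix ι ι R} {f : R →+* S}
    (hf : A.charpoly.map f = X ^ Fintype.card ι) : (A ^ Fintype.card ι).map f = 0 := by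
  have := aeval_self_charpoly (A.map f)
  rwa [charpoly_map, hf, map_pow, aeval_X, ← Matrix.map_pow] at this

theorem eventuallyIntegral_eq_top_of_pow_eq_smul [IsDomain R] [IsDiscreteValuationRing R]
    [IsFractionRing R K] {A C : Matrix ι ι R} {ϖ : R} (hϖ : Irreducible ϖ) {m : ℕ}
    (hAC : A ^ m = ϖ • C) : eventuallyIntegral K A = ⊤ := by
  refine eq_top_iff.2 fun v _ => ?_
  obtain ⟨k, hk⟩ := exists_smul_mem_integralVectors hϖ v
  refine ⟨m * k, ?_⟩
  have hpow : (A ^ (m * k)).map (algebraMap R K) *ᵥ v =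
      (C ^ k).map (algebraMap R K) *ᵥ (ϖ ^ k • v) := by
    rw [pow_mul, hAC, _root_.smul_pow, map_smul_algebraMap, smul_mulVec, mulVec_smul]
  rw [hpow]
  exact map_mulVec_mem_integralVectors _ hk

theorem eventuallyIntegral_eq_top_of_charpoly_map [IsDomain R] [IsDiscreteValuationRing R]
    [IsFractionRing R K] [Nontrivial S] {A : Matrix ι ι R} {f : R →+* S}
    (hf : A.charpoly.map f = X ^ Fintype.card ι) : eventuallyIntegral K A = ⊤ := by
  obtain ⟨ϖ, hϖ⟩ := IsDiscreteValuationRing.exists_irreducible R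
  have hdvd (i j : ι) : ϖ ∣ (A ^ Fintype.card ι) i j := by
    rw [← Ideal.mem_span_singleton, ← hϖ.maximalIdeal_eq]
    exact IsLocalRing.le_maximalIdeal (RingHom.ker_ne_top f)
      (congrFun₂ (map_pow_card_eq_zero_of_charpoly_map hf) i j)
  choose C hC using hdvd
  exact eventuallyIntegral_eq_top_of_pow_eq_smul (C := of C) hϖ (Matrix.ext hC)

end EventuallyIntegral

section Padic

theorem isInteger_int_of_forall_padic {q : ℚ}
    (hq : ∀ (p : ℕ) [Fact p.Prime], IsInteger ℤ_[p] (algebraMap ℚ ℚ_[p] q)) :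
    IsInteger ℤ q := by
  have hden : q.den = 1 := by
    by_contra hne
    obtain ⟨p, hp, hpq⟩ := Nat.exists_prime_and_dvd hne
    have : Fact p.Prime := ⟨hp⟩
    obtain ⟨z, hz⟩ := hq p
    have hunit : IsUnit (q.den : ℤ_[p]) := by
      refine PadicInt.isUnit_den q ?_
      rw [← eq_ratCast (algebraMap ℚ ℚ_[p]), ← hz]
      exact z.norm_le_one
    rw [PadicInt.isUnit_iff] at hunit
    exact hp.coprime_iff_not_dvd.1 (PadicInt.norm_natCast_eq_one_iff.1 hunit) hpq
  exact ⟨q.num, (Rat.den_eq_one_iff q).1 hden⟩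

theorem isUnit_intCast_padicInt {p : ℕ} [Fact p.Prime] {d : ℤ} (hd : ¬(p : ℤ) ∣ d) :
    IsUnit (algebraMap ℤ ℤ_[p] d) := by
  rw [PadicInt.isUnit_iff]
  exact (PadicInt.norm_le_one _).antisymm
    (not_lt.1 ((PadicInt.norm_int_lt_one_iff_dvd d).not.2 hd))

variable {ι : Type*} [Fintype ι] [DecidableEq ι] {A : Matrix ι ι ℤ}

theorem eventuallyIntegral_padic_eq_integralVectors {p : ℕ} [Fact p.Prime]
    (hp : ¬(p : ℤ) ∣ A.det) :
    eventuallyIntegral ℚ_[p] (A.map (algebraMap ℤ ℤ_[p])) = integralVectors ℤ_[p] ℚ_[p] ι := by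
  refine eventuallyIntegral_eq_integralVectors_of_isUnit_det ?_
  rw [← RingHom.mapMatrix_apply, ← RingHom.map_det]
  exact isUnit_intCast_padicInt hp

theorem eventuallyIntegral_padic_eq_top {p : ℕ} [Fact p.Prime]
    (hp : A.charpoly.map (Int.castRingHom (ZMod p)) = X ^ Fintype.card ι) :
    eventuallyIntegral ℚ_[p] (A.map (algebraMap ℤ ℤ_[p])) = ⊤ := by
  refine eventuallyIntegral_eq_top_of_charpoly_map (f := PadicInt.toZMod) ?_
  rwa [charpoly_map, Polynomial.map_map, RingHom.eq_intCast' (PadicInt.toZMod.comp _)]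

theorem exists_pow_forall_padic_mem_integralVectors (hA : A.det ≠ 0) {v : ι → ℚ}
    (hv : ∀ (p : ℕ) [Fact p.Prime],
      algebraMap ℚ ℚ_[p] ∘ v ∈ eventuallyIntegral ℚ_[p] (A.map (algebraMap ℤ ℤ_[p]))) :
    ∃ m : ℕ, ∀ (p : ℕ) [Fact p.Prime],
      algebraMap ℚ ℚ_[p] ∘ ((A ^ m).map (algebraMap ℤ ℚ) *ᵥ v) ∈
        integralVectors ℤ_[p] ℚ_[p] ι := by
  -- The exponents are indexed by all of `ℕ`, not by primality proofs, so that `Finset.sup` applies.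
  have hexp (p : ℕ) : ∃ m : ℕ, ∀ [Fact p.Prime],
      ((A.map (algebraMap ℤ ℤ_[p])) ^ m).map (algebraMap ℤ_[p] ℚ_[p]) *ᵥ
        (algebraMap ℚ ℚ_[p] ∘ v) ∈ integralVectors ℤ_[p] ℚ_[p] ι := by
    by_cases hp : Fact p.Prime
    · obtain ⟨m, hm⟩ := hv p
      exact ⟨m, hm⟩
    · exact ⟨0, fun {h} => absurd h hp⟩
  choose k hk using hexp
  refine ⟨A.det.natAbs.primeFactors.sup k, fun p hp => ?_⟩
  rw [← pow_baseChange_mulVec (S := ℤ_[p])]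
  by_cases hd : (p : ℤ) ∣ A.det
  · have hmem : p ∈ A.det.natAbs.primeFactors :=
      Nat.mem_primeFactors.2 ⟨hp.1, Int.natCast_dvd.1 hd, Int.natAbs_ne_zero.2 hA⟩
    exact pow_mulVec_mem_integralVectors_of_le (Finset.le_sup hmem) (hk p)
  · have hvp := hv p
    rw [eventuallyIntegral_padic_eq_integralVectors hd] at hvp
    exact map_mulVec_mem_integralVectors _ hvp

theorem mem_eventuallyIntegral_iff_forall_padic (hA : A.det ≠ 0) {v : ι → ℚ} :
    v ∈ eventuallyIntegral ℚ A ↔ ∀ (p : ℕ) [Fact p.Prime],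
      algebraMap ℚ ℚ_[p] ∘ v ∈ eventuallyIntegral ℚ_[p] (A.map (algebraMap ℤ ℤ_[p])) := by
  refine ⟨fun hv p _ => comp_algebraMap_mem_eventuallyIntegral ℤ_[p] ℚ_[p] hv, fun hv => ?_⟩
  obtain ⟨m, hm⟩ := exists_pow_forall_padic_mem_integralVectors hA hv
  exact ⟨m, fun i => isInteger_int_of_forall_padic fun p _ => hm p i⟩

theorem forall_mulVec_mem_eventuallyIntegral_iff_forall_padic (hA : A.det ≠ 0)
    {T : Matrix ι ι ℚ} :
    (∀ v ∈ eventuallyIntegral ℚ A, T *ᵥ v ∈ eventuallyIntegral ℚ A) ↔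
      ∀ (p : ℕ) [Fact p.Prime],
        ∀ v ∈ eventuallyIntegral ℚ_[p] (A.map (algebraMap ℤ ℤ_[p])),
          T.map (algebraMap ℚ ℚ_[p]) *ᵥ v ∈
            eventuallyIntegral ℚ_[p] (A.map (algebraMap ℤ ℤ_[p])) := by
  refine ⟨fun hT p _ v hv => map_mulVec_mem_eventuallyIntegral_map ?_ hT hv,
    fun hT v hv => (mem_eventuallyIntegral_iff_forall_padic hA).2 fun p _ => ?_⟩
  · exact (Int.cast_ne_zero.2 hA).isUnit
  · rw [algebraMap_comp_mulVec]
    exact hT p _ ((mem_eventuallyIntegral_iff_forall_padic hA).1 hv p)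

end Padic

section Groups

variable {n : ℕ} {A : Matrix (Fin n) (Fin n) ℤ}

theorem GA_eq_eventuallyIntegral (hA : A.det ≠ 0) : GA A = eventuallyIntegral ℚ A :=
  Set.ext fun _ => (mem_eventuallyIntegral_iff_exists_zpow (Int.cast_ne_zero.2 hA).isUnit).symm

theorem GAp_eq_eventuallyIntegral (hA : A.det ≠ 0) (p : ℕ) [Fact p.Prime] :
    GAp A p = eventuallyIntegral ℚ_[p] (A.map (algebraMap ℤ ℤ_[p])) := by
  have hdet : IsUnit (algebraMap ℤ_[p] ℚ_[p] (A.map (algebraMap ℤ ℤ_[p])).det) := by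
    rw [← RingHom.mapMatrix_apply, ← RingHom.map_det, ← IsScalarTower.algebraMap_apply]
    exact (Int.cast_ne_zero.2 hA).isUnit
  exact Set.ext fun _ => (mem_eventuallyIntegral_iff_exists_zpow hdet).symm

theorem mem_Rdet_iff (hA : A.det ≠ 0) {r : ℚ} :
    r ∈ Rdet A ↔ ∃ l : ℕ, IsInteger ℤ (A.det ^ l • r) := by
  have hdet : (A.det : ℚ) ≠ 0 := Int.cast_ne_zero.2 hA
  have hiff (a : ℤ) (l : ℕ) : r = a / (A.det : ℚ) ^ l ↔ (a : ℚ) = A.det ^ l • r := by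
    rw [eq_div_iff (pow_ne_zero l hdet), zsmul_eq_mul, Int.cast_pow, mul_comm, eq_comm]
  exact exists_comm.trans (exists_congr fun l => exists_congr fun a => hiff a l)

theorem isInteger_padicInt_of_mem_Rdet {p : ℕ} [Fact p.Prime] (hp : ¬(p : ℤ) ∣ A.det) {r : ℚ}
    (hr : r ∈ Rdet A) : IsInteger ℤ_[p] (algebraMap ℚ ℚ_[p] r) := by
  have hA : A.det ≠ 0 := fun h => hp (h ▸ dvd_zero _)
  obtain ⟨l, hl⟩ := (mem_Rdet_iff hA).1 hr
  have hint : IsInteger ℤ_[p] (algebraMap ℚ ℚ_[p] (A.det ^ l • r)) :=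
    isInteger_algebraMap_of_isInteger hl
  refine isInteger_of_isInteger_smul ((isUnit_intCast_padicInt hp).pow l) ?_
  rwa [← map_pow, algebraMap_smul, ← map_zsmul]

end Groups

/-- `T(G_A) ⊆ G_A` iff `T ∈ M_n(ℤ[1/det A])` and `T` maps `Ḡ_{A,p}` into
itself for every `p ∈ P'(A)`. -/
theorem stmt0 (n : ℕ) (A : Matrix (Fin n) (Fin n) ℤ) (hA : A.det ≠ 0)
    (T : Matrix (Fin n) (Fin n) ℚ) :
    (∀ v ∈ GA A, T *ᵥ v ∈ GA A) ↔
      ((∀ i j, T i j ∈ Rdet A) ∧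
        ∀ (p : ℕ) [Fact p.Prime], p ∈ Pbad A →
          ∀ v ∈ GAp A p, (T.map (Rat.cast : ℚ → ℚ_[p])) *ᵥ v ∈ GAp A p) := by
  rw [GA_eq_eventuallyIntegral hA]
  simp only [GAp_eq_eventuallyIntegral hA, SetLike.mem_coe]
  constructor
  · exact fun hT => ⟨fun i j => (mem_Rdet_iff hA).2 (exists_isInteger_det_pow_smul hT i j),
      fun p _ _ => (forall_mulVec_mem_eventuallyIntegral_iff_forall_padic hA).1 hT p⟩
  · rintro ⟨hR, hP⟩
    refine (forall_mulVec_mem_eventuallyIntegral_iff_forall_padic hA).2 fun p hp v hv => ?_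
    by_cases hdvd : (p : ℤ) ∣ A.det
    · by_cases hX : A.charpoly.map (Int.castRingHom (ZMod p)) = X ^ n
      · rw [eventuallyIntegral_padic_eq_top (by rwa [Fintype.card_fin])]
        exact Submodule.mem_top
      · exact hP p ⟨hp.1, hdvd, hX⟩ v hv
    · rw [eventuallyIntegral_padic_eq_integralVectors hdvd] at hv ⊢
      exact mulVec_mem_integralVectors
        (fun i j => isInteger_padicInt_of_mem_Rdet hdvd (hR i j)) hv
end
end

section
/- Let A ∈ M_n(ℤ) be non-singular with h_A irreducible over ℚ and P'(A) ≠ ∅, and assume there exists a prime p with gcd(n, t_p) = 1. Let K be a number field with ring of integers O_K, and λ ∈ O_K a root of h_A with K = ℚ(λ). Then End(G_A) = {T ∈ M_n(ℚ) : T(G_A) ⊆ G_A} is a subring of M_n(ℚ), and there exists an injective ring homomorphism ι : End(G_A) → K with ι(A) = λ such that for every T ∈ End(G_A) there exists k ∈ ℕ with λ^k·ι(T) ∈ O_K; moreover, if T is invertible with T(G_A) = G_A, then both ι(T) and ι(T)⁻¹ satisfy this integrality condition (i.e., ι(T) is an S_λ-unit). -/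
open Matrix Polynomial

noncomputable section

/-- `t_p`: multiplicity of `0` as a root of `h_A` mod `p`. -/
def tp {n : ℕ} (A : Matrix (Fin n) (Fin n) ℤ) (p : ℕ) : ℕ :=
  Polynomial.rootMultiplicity 0 (A.charpoly.map (Int.castRingHom (ZMod p)))

/-!
Let `L` be the splitting field of `h_A`. For `T ∈ End(G_A)` and roots `x`, `y` of `h_A`, let
`T_{xy}` be the component of `T` from the `y`-eigenline of `A` to the `x`-eigenline. Let `v` be a
place of `L` above `p`. For every `k` some power `A^s` satisfies `A^s T = Y A^k` with `Y` integral,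
and comparing components gives `x^s T_{xy} = y^k Y_{xy}`. If `v(x) = 1` and `v(y) < 1`, then
`k → ∞` yields `T_{xy} = 0`: the set of the `t_p` roots `x` with `v(x) < 1` is closed under the
relation `T_{xy} ≠ 0`. This relation is invariant under the Galois group, which is transitive on
the roots, so the preorder it generates is an equivalence relation whose classes all have the same
size. That size divides both `n` and `t_p`, so it is `1`. Thus `T` is diagonal in an eigenbasis of
`A` and commutes with `A`. The centralizer of `A` is `ℚ[A] ≅ K`, and the case `k = 0` of
`A^s T = Y A^k` gives integrality, as `λ^s ι(T)` corresponds to the integral matrix `Y`.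
-/

section InvariantRelations

open MulAction Relation

variable {G X : Type*} [Group G] [MulAction G X]

-- If `b = g • a`, then `a` reaches `g • a`, which reaches `g ^ 2 • a`, and so on back to `a`.
theorem reflTransGen_symm_of_smul [Finite X] [IsPretransitive G X] {r : X → X → Prop}
    (hr : ∀ (g : G) {a b}, r a b → r (g • a) (g • b)) {a b : X} (hab : ReflTransGen r a b) :
    ReflTransGen r b a := by
  obtain ⟨g, rfl⟩ := exists_smul_eq G a b
  have hstep (m : ℕ) : ReflTransGen r (g ^ m • a) (g ^ (m + 1) • a) := by
    rw [pow_succ, mul_smul]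
    exact ReflTransGen.lift (g ^ m • ·) (fun _ _ ↦ hr (g ^ m)) _ _ hab
  have hpow (m : ℕ) : ReflTransGen r (g • a) (g ^ (m + 1) • a) := by
    induction m with
    | zero => simp only [zero_add, pow_one, ReflTransGen.refl]
    | succ m ih => exact ih.trans (hstep (m + 1))
  obtain ⟨m, hm, hgm⟩ := isOfFinOrder_iff_pow_eq_one.1 (isOfFinOrder_of_finite (toPermHom G X g))
  rw [← map_pow] at hgm
  have hgm : g ^ m • a = a := congr($hgm a)
  simpa only [Nat.sub_add_cancel hm, hgm] using hpow (m - 1)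

theorem ncard_setoid_class_dvd_card [Finite X] [IsPretransitive G X] {s : Setoid X}
    (hs : ∀ (g : G) {a b}, s a b → s (g • a) (g • b)) {I : Finset X}
    (hI : ∀ {a b}, s a b → b ∈ I → a ∈ I) (c : X) : {a | s a c}.ncard ∣ I.card := by
  classical
  have hle (c d : X) : {a | s a c}.ncard ≤ {a | s a d}.ncard := by
    obtain ⟨g, rfl⟩ := exists_smul_eq G c d
    exact Set.ncard_le_ncard_of_injOn (g • ·) (fun _ ↦ hs g) (MulAction.injective g).injOn
  rw [Finset.card_eq_sum_card_image (Quotient.mk s) I]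
  refine Finset.dvd_sum fun q hq ↦ ?_
  obtain ⟨d, hd, rfl⟩ := Finset.mem_image.1 hq
  have hfiber : (I.filter fun a ↦ Quotient.mk s a = Quotient.mk s d : Set X) = {a | s a d} := by
    ext a
    simp only [Finset.coe_filter, Quotient.eq, Set.mem_ofPred_eq, and_iff_right_iff_imp]
    exact fun had ↦ hI had hd
  rw [← Set.ncard_coe_finset, hfiber, (hle c d).antisymm (hle d c)]

theorem eq_of_rel_of_coprime_card [Fintype X] [IsPretransitive G X] {r : X → X → Prop}
    (hr : ∀ (g : G) {a b}, r a b → r (g • a) (g • b)) {I : Finset X}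
    (hI : ∀ {a b}, r a b → b ∈ I → a ∈ I) (hcop : (Fintype.card X).Coprime I.card)
    {a b : X} (hab : r a b) : a = b := by
  let s : Setoid X :=
    { r := ReflTransGen r
      iseqv := ⟨fun _ ↦ .refl, reflTransGen_symm_of_smul hr, .trans⟩ }
  have hs (g : G) {a b : X} (h : s a b) : s (g • a) (g • b) :=
    ReflTransGen.lift (g • ·) (fun _ _ ↦ hr g) _ _ h
  have hsI {a b : X} (h : s a b) (hb : b ∈ I) : a ∈ I :=
    h.head_induction_on hb fun hac _ hc ↦ hI hac hc
  have hclass : {x | s x b}.ncard = 1 := Nat.eq_one_of_dvd_coprimes hcop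
    (ncard_setoid_class_dvd_card hs (I := Finset.univ) (fun _ _ ↦ Finset.mem_univ _) b)
    (ncard_setoid_class_dvd_card hs hsI b)
  exact (Set.ncard_le_one_iff (Set.toFinite _)).1 hclass.le (.single hab) .refl

end InvariantRelations

section Eigencofactors

variable {R S : Type*} [CommRing R] [Ring S] [Algebra R S]

/-- The polynomial `f / (X - x)` evaluated at `b`. When `x` is a simple root of `f` and `f(b) = 0`,
it is `f'(x)` times the projector onto the `x`-eigenspace of `b`; it is left unnormalised, so that
ring homomorphisms carry eigencofactors to eigencofactors without any invertibility condition. -/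
def eigencofactor (f : R[X]) (b : S) (x : R) : S :=
  aeval b (f /ₘ (X - C x))

theorem mul_eigencofactor {f : R[X]} {b : S} (hb : aeval b f = 0) {x : R} (hx : f.IsRoot x) :
    b * eigencofactor f b x = x • eigencofactor f b x := by
  have h : aeval b ((X - C x) * (f /ₘ (X - C x))) = 0 := by
    rw [mul_divByMonic_eq_iff_isRoot.2 hx, hb]
  rw [map_mul, map_sub, aeval_X, aeval_C, sub_mul, sub_eq_zero, ← Algebra.smul_def] at h
  exact h

theorem eigencofactor_mul {f : R[X]} {b : S} (hb : aeval b f = 0) {x : R} (hx : f.IsRoot x) :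
    eigencofactor f b x * b = x • eigencofactor f b x := by
  rw [← mul_eigencofactor hb hx]
  simpa only [eigencofactor, aeval_X] using ((Commute.all (f /ₘ (X - C x)) X).map (aeval b)).eq

theorem map_eigencofactor {R' S' : Type*} [CommRing R'] [Ring S'] [Algebra R' S'] {φ : R →+* R'}
    {ψ : S →+* S'} (h : (algebraMap R' S').comp φ = ψ.comp (algebraMap R S)) (f : R[X]) (b : S)
    (x : R) : ψ (eigencofactor f b x) = eigencofactor (f.map φ) (ψ b) (φ x) := by
  rw [eigencofactor, map_aeval_eq_aeval_map h, map_divByMonic _ (monic_X_sub_C x),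
    Polynomial.map_sub, map_X, map_C, eigencofactor]

variable {F A X : Type*} [Field F] [Ring A] [Algebra F A] [Fintype X] {r : X → F}

theorem exists_sum_smul_eigencofactor_eq_one [Nonempty X] (hr : Function.Injective r) (b : A) :
    ∃ w : X → F, ∑ x, w x • eigencofactor (∏ x, (Polynomial.X - C (r x))) b (r x) = 1 := by
  classical
  refine ⟨Lagrange.nodalWeight Finset.univ r, ?_⟩
  have h := congrArg (aeval b) (Lagrange.sum_basis (s := Finset.univ) hr.injOn Finset.univ_nonempty)
  rw [map_sum, map_one] at h
  rw [← h]
  refine Finset.sum_congr rfl fun x hx ↦ ?_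
  rw [Lagrange.basis_eq_prod_sub_inv_mul_nodal_div hx, map_mul, aeval_C, ← Algebra.smul_def,
    ← divByMonic_eq_div _ (monic_X_sub_C _), Lagrange.nodal, eigencofactor]

theorem commute_of_eigencofactor_mul_mul_eq_zero [Nonempty X] (hr : Function.Injective r)
    {f : F[X]} (hf : f = ∏ x, (Polynomial.X - C (r x))) {b t : A} (hb : aeval b f = 0)
    (h : ∀ x y, x ≠ y → eigencofactor f b (r x) * t * eigencofactor f b (r y) = 0) :
    Commute b t := by
  have hroot (x : X) : f.IsRoot (r x) := by
    rw [hf, isRoot_prod]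
    exact ⟨x, Finset.mem_univ x, root_X_sub_C.2 rfl⟩
  have hzero (x y : X) :
      eigencofactor f b (r x) * (b * t - t * b) * eigencofactor f b (r y) = 0 := by
    calc
      _ = (r x - r y) • (eigencofactor f b (r x) * t * eigencofactor f b (r y)) := by
        rw [mul_sub, sub_mul, ← mul_assoc, eigencofactor_mul hb (hroot x), ← mul_assoc,
          mul_assoc _ b, mul_eigencofactor hb (hroot y), sub_smul, smul_mul_assoc, smul_mul_assoc,
          mul_smul_comm]
      _ = 0 := by
        obtain rfl | hxy := eq_or_ne x y
        · rw [sub_self, zero_smul]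
        · rw [h x y hxy, smul_zero]
  obtain ⟨w, hw⟩ := exists_sum_smul_eigencofactor_eq_one hr b
  rw [← hf] at hw
  refine sub_eq_zero.1 ?_
  rw [← one_mul (b * t - t * b), ← mul_one (1 * _), ← hw, Finset.sum_mul, Finset.sum_mul_sum]
  refine Finset.sum_eq_zero fun x _ ↦ Finset.sum_eq_zero fun y _ ↦ ?_
  rw [smul_mul_assoc, smul_mul_smul_comm, hzero, smul_zero]

end Eigencofactors

section Eigenvectors

variable {R A : Type*} [CommSemiring R] [Semiring A] [Algebra R A] {a e : A} {x : R}

theorem pow_mul_eq_smul_of_mul_eq_smul (h : a * e = x • e) (k : ℕ) : a ^ k * e = x ^ k • e := by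
  induction k with
  | zero => simp only [pow_zero, one_mul, one_smul]
  | succ k ih => rw [pow_succ', mul_assoc, ih, mul_smul_comm, h, smul_smul, pow_succ]

theorem mul_pow_eq_smul_of_mul_eq_smul (h : e * a = x • e) (k : ℕ) : e * a ^ k = x ^ k • e := by
  induction k with
  | zero => simp only [pow_zero, mul_one, one_smul]
  | succ k ih => rw [pow_succ, ← mul_assoc, ih, smul_mul_assoc, h, smul_smul, pow_succ]

end Eigenvectors

section Valuations

variable {L Γ₀ ι : Type*} [Field L] [LinearOrderedCommGroupWithZero Γ₀] {v : Valuation L Γ₀}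

theorem eq_zero_of_forall_valuation_le_pow_mul [MulArchimedean Γ₀] {c y : L} {b : Γ₀}
    (hy : v y < 1) (h : ∀ k : ℕ, v c ≤ v y ^ k * b) : c = 0 := by
  by_contra hc
  have hvc : 0 < v c := zero_lt_iff.2 (v.ne_zero_iff.2 hc)
  have hb : 0 < b := zero_lt_iff.2 fun hb ↦ hvc.not_ge (by simpa [hb] using h 0)
  obtain ⟨k, hk⟩ := exists_pow_lt₀ hy (Units.mk0 (v c / b) (div_pos hvc hb).ne')
  exact ((lt_div_iff₀ hb).1 hk).not_ge (h k)

theorem exists_forall_valuation_le [Finite ι] (v : Valuation L Γ₀) (E : Matrix ι ι L) :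
    ∃ b, ∀ i j, v (E i j) ≤ b := by
  obtain ⟨b, hb⟩ := (Set.finite_range fun ij : ι × ι ↦ v (E ij.1 ij.2)).bddAbove
  exact ⟨b, fun i j ↦ hb ⟨(i, j), rfl⟩⟩

variable [Fintype ι]

theorem valuation_mul_apply_le {E F : Matrix ι ι L} {b c : Γ₀} (hE : ∀ i j, v (E i j) ≤ b)
    (hF : ∀ i j, v (F i j) ≤ c) (i j : ι) : v ((E * F) i j) ≤ b * c := by
  rw [Matrix.mul_apply]
  refine v.map_sum_le fun k _ ↦ ?_
  rw [map_mul]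
  exact mul_le_mul' (hE i k) (hF k j)

theorem mul_mul_eq_zero_of_valuation_lt_one [MulArchimedean Γ₀] [DecidableEq ι]
    {B T E F : Matrix ι ι L} {x y : L} (hE : E * B = x • E) (hF : B * F = y • F) (hx : 1 ≤ v x)
    (hy : v y < 1)
    (hT : ∀ k : ℕ, ∃ (s : ℕ) (Y : Matrix ι ι L),
      (∀ i j, v (Y i j) ≤ 1) ∧ B ^ s * T = Y * B ^ k) : E * T * F = 0 := by
  obtain ⟨b, hb⟩ := exists_forall_valuation_le v E
  obtain ⟨c, hc⟩ := exists_forall_valuation_le v F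
  ext i j
  refine eq_zero_of_forall_valuation_le_pow_mul hy (b := b * c) fun k ↦ ?_
  obtain ⟨s, Y, hY, hTY⟩ := hT k
  have hEY (i j : ι) : v ((E * Y) i j) ≤ b := by
    simpa only [mul_one] using valuation_mul_apply_le hb hY i j
  -- `T` is exchanged for a `Y` of bounded valuation at the cost of `y ^ k`, with `k` at our choice.
  have hscale : x ^ s • (E * T * F) = y ^ k • (E * Y * F) := by
    calc
      _ = E * (B ^ s * T) * F := by
        rw [← smul_mul_assoc, ← smul_mul_assoc, ← mul_pow_eq_smul_of_mul_eq_smul hE, mul_assoc E]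
      _ = E * Y * (B ^ k * F) := by rw [hTY, ← mul_assoc, mul_assoc]
      _ = _ := by rw [pow_mul_eq_smul_of_mul_eq_smul hF, mul_smul_comm]
  calc
    v ((E * T * F) i j) ≤ v x ^ s * v ((E * T * F) i j) :=
      le_mul_of_one_le_left' (one_le_pow_of_one_le' hx s)
    _ = v y ^ k * v ((E * Y * F) i j) := by
      simpa only [Matrix.smul_apply, smul_eq_mul, map_mul, map_pow] using congr(v ($hscale i j))
    _ ≤ v y ^ k * (b * c) := mul_le_mul_right (valuation_mul_apply_le hEY hc i j) _

end Valuations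

section RootSets

variable {F L : Type*} [Field F] [Field L] [Algebra F L]

theorem isRoot_map_of_mem_rootSet {f : F[X]} {x : L} (hx : x ∈ f.rootSet L) :
    (f.map (algebraMap F L)).IsRoot x := by
  rw [IsRoot, eval_map_algebraMap]
  exact (mem_rootSet.1 hx).2

theorem isPretransitive_rootSet [Normal F L] {f : F[X]} (hf : Irreducible f) :
    MulAction.IsPretransitive Gal(L/F) (f.rootSet L) := by
  refine ⟨fun x y ↦ ?_⟩
  have hxy := (minpoly.eq_of_irreducible hf (mem_rootSet.1 y.2).2).symm.trans
    (minpoly.eq_of_irreducible hf (mem_rootSet.1 x.2).2)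
  obtain ⟨g, hg⟩ := (Normal.minpoly_eq_iff_mem_orbit L).1 hxy
  exact ⟨g, Subtype.ext hg⟩

theorem map_eq_prod_rootSet {f : F[X]} (hmonic : f.Monic) (hsep : f.Separable)
    (hsplits : (f.map (algebraMap F L)).Splits) :
    f.map (algebraMap F L) = ∏ x : f.rootSet L, (X - C (x : L)) := by
  classical
  conv_lhs => rw [hsplits.eq_prod_roots_of_monic (hmonic.map _)]
  rw [Finset.prod_set_coe (f.rootSet L) (f := fun x ↦ X - C x)]
  simp only [rootSet_def, Finset.toFinset_coe, Finset.prod_eq_multiset_prod,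
    Multiset.toFinset_val, aroots, (nodup_roots hsep.map).dedup]

theorem rootMultiplicity_map_prod_X_sub_C {O k X : Type*} [CommRing O] [CommRing k] [IsDomain k]
    [DecidableEq k] [Fintype X] (φ : O →+* k) (r : X → O) (a : k) :
    rootMultiplicity a ((∏ x, (Polynomial.X - C (r x))).map φ) =
      (Finset.univ.filter fun x ↦ φ (r x) = a).card := by
  classical
  have hprod : (∏ x, (Polynomial.X - C (r x))).map φ =
      ((Finset.univ.val.map fun x ↦ φ (r x)).map fun c ↦ Polynomial.X - C c).prod := by
    rw [Polynomial.map_prod, Multiset.map_map, Finset.prod_eq_multiset_prod]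
    simp only [Polynomial.map_sub, map_X, map_C, Function.comp_def]
  rw [hprod, ← count_roots, roots_multiset_prod_X_sub_C, Multiset.count_map]
  simp only [eq_comm (a := a)]
  rfl

end RootSets

section Components

variable {F L ι : Type*} [Field F] [Field L] [Algebra F L] [Fintype ι] [DecidableEq ι]

/-- The component of `T` from the `y`-eigenspace to the `x`-eigenspace of `M` over an extension `L`,
up to the nonzero scalar by which the eigencofactors differ from projectors. -/
def eigencomponent (M T : Matrix ι ι F) (x y : L) : Matrix ι ι L :=
  eigencofactor (M.charpoly.map (algebraMap F L)) (M.map (algebraMap F L)) x *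
    T.map (algebraMap F L) *
    eigencofactor (M.charpoly.map (algebraMap F L)) (M.map (algebraMap F L)) y

theorem map_eigencomponent (M T : Matrix ι ι F) (x y : L) (g : L →ₐ[F] L) :
    (eigencomponent M T x y).map g = eigencomponent M T (g x) (g y) := by
  have hfix (N : Matrix ι ι F) :
      g.toRingHom.mapMatrix (N.map (algebraMap F L)) = N.map (algebraMap F L) :=
    Matrix.ext fun i j ↦ g.commutes (N i j)
  have hcompat : (algebraMap L (Matrix ι ι L)).comp g.toRingHom =
      g.toRingHom.mapMatrix.comp (algebraMap L (Matrix ι ι L)) := by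
    ext a i j
    simp [Matrix.algebraMap_matrix_apply, apply_ite g]
  have hcofactor (z : L) := map_eigencofactor hcompat (M.charpoly.map (algebraMap F L))
    (M.map (algebraMap F L)) z
  simp only [hfix, Polynomial.map_map] at hcofactor
  rw [AlgHom.toRingHom_eq_coe, g.comp_algebraMap] at hcofactor
  change g.toRingHom.mapMatrix _ = _
  rw [eigencomponent, map_mul, map_mul, hfix]
  exact congr($(hcofactor x) * _ * $(hcofactor y))

theorem aeval_map_charpoly (M : Matrix ι ι F) :
    aeval (M.map (algebraMap F L)) (M.charpoly.map (algebraMap F L)) = 0 := by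
  rw [← Matrix.charpoly_map]
  exact Matrix.aeval_self_charpoly _

end Components

section Places

open NumberField IsDedekindDomain

variable {L : Type*} [Field L] [NumberField L]

theorem exists_heightOneSpectrum_natCast_mem {p : ℕ} (hp : p.Prime) :
    ∃ v : HeightOneSpectrum (𝓞 L), (p : 𝓞 L) ∈ v.asIdeal := by
  have hspan : (Ideal.span {(p : ℤ)}).IsMaximal :=
    have := Fact.mk hp
    Int.ideal_span_isMaximal_of_prime p
  obtain ⟨P, hP, hover⟩ :=
    Ideal.exists_maximal_ideal_liesOver_of_isIntegral (S := 𝓞 L) (Ideal.span {(p : ℤ)})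
  have hpP : (p : 𝓞 L) ∈ P := by
    simpa using (P.mem_of_liesOver (Ideal.span {(p : ℤ)}) p).1 (Ideal.mem_span_singleton_self _)
  refine ⟨⟨P, hP.isPrime, ?_⟩, hpP⟩
  rintro rfl
  exact hp.ne_zero (by simpa using hpP)

open Classical in
theorem tp_eq_card_valuation_lt_one {n : ℕ} (A : Matrix (Fin n) (Fin n) ℤ) {p : ℕ} (hp : p.Prime)
    {v : HeightOneSpectrum (𝓞 L)} (hv : (p : 𝓞 L) ∈ v.asIdeal) {X : Type*} [Fintype X] {r : X → L}
    (hr : A.charpoly.map (Int.castRingHom L) = ∏ x, (Polynomial.X - C (r x))) :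
    tp A p = (Finset.univ.filter fun x ↦ v.valuation L (r x) < 1).card := by
  have hint (x : X) : IsIntegral ℤ (r x) := by
    refine ⟨A.charpoly, A.charpoly_monic, ?_⟩
    rw [algebraMap_int_eq, ← eval_map, hr, eval_prod]
    exact Finset.prod_eq_zero (Finset.mem_univ x) (by simp)
  let s (x : X) : 𝓞 L := ⟨r x, hint x⟩
  have hs : A.charpoly.map (Int.castRingHom (𝓞 L)) = ∏ x, (Polynomial.X - C (s x)) := by
    apply Polynomial.map_injective (algebraMap (𝓞 L) L) RingOfIntegers.coe_injective
    rw [Polynomial.map_map, RingHom.ext_int ((algebraMap (𝓞 L) L).comp _) (Int.castRingHom L), hr,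
      Polynomial.map_prod]
    simp only [Polynomial.map_sub, map_X, map_C]
    rfl
  have hchar : CharP (𝓞 L ⧸ v.asIdeal) p :=
    (CharP.charP_iff_prime_eq_zero hp).2 (Ideal.Quotient.eq_zero_iff_mem.2 hv)
  have := Fact.mk hp
  rw [tp, eq_rootMultiplicity_map (ZMod.castHom dvd_rfl (𝓞 L ⧸ v.asIdeal)).injective, map_zero,
    Polynomial.map_map, RingHom.ext_int (RingHom.comp _ _)
      ((Ideal.Quotient.mk v.asIdeal).comp (Int.castRingHom (𝓞 L))), ← Polynomial.map_map, hs,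
    rootMultiplicity_map_prod_X_sub_C]
  simp only [Ideal.Quotient.eq_zero_iff_mem, ← v.valuation_lt_one_iff_mem (K := L)]
  rfl

end Places

section MatrixStabilizer

/-- The ring of square matrices that map a given subgroup of `R^ι` into itself. -/
def matrixStabilizer {R ι : Type*} [Ring R] [Fintype ι] [DecidableEq ι] (G : AddSubgroup (ι → R)) :
    Subring (Matrix ι ι R) where
  carrier := {T | ∀ v ∈ G, T *ᵥ v ∈ G}
  mul_mem' {S T} hS hT v hv := by
    rw [← Matrix.mulVec_mulVec]
    exact hS _ (hT v hv)
  one_mem' v hv := by rwa [Matrix.one_mulVec]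
  add_mem' {S T} hS hT v hv := by
    rw [Matrix.add_mulVec]
    exact add_mem (hS v hv) (hT v hv)
  zero_mem' v _ := by
    rw [Matrix.zero_mulVec]
    exact zero_mem G
  neg_mem' {T} hT v hv := by
    rw [Matrix.neg_mulVec]
    exact neg_mem (hT v hv)

theorem inv_mem_matrixStabilizer {R ι : Type*} [CommRing R] [Fintype ι] [DecidableEq ι]
    {G : AddSubgroup (ι → R)} {T : Matrix ι ι R} (hT : IsUnit T)
    (hTG : (T *ᵥ ·) '' (G : Set (ι → R)) = G) : T⁻¹ ∈ matrixStabilizer G := by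
  intro v hv
  obtain ⟨w, hw, rfl⟩ := hTG.symm.subset hv
  have hdet := (Matrix.isUnit_iff_isUnit_det T).1 hT
  rwa [Matrix.mulVec_mulVec, Matrix.nonsing_inv_mul T hdet, Matrix.one_mulVec]

end MatrixStabilizer

section MatrixGroup

open Filter

variable {n : ℕ} {A : Matrix (Fin n) (Fin n) ℤ}

theorem isUnit_det_Aq (hA : A.det ≠ 0) : IsUnit (Aq A).det := by
  have hdet : (Aq A).det = A.det := ((Int.castRingHom ℚ).map_det A).symm
  rw [hdet]
  exact (Int.cast_ne_zero.2 hA).isUnit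

theorem charpoly_Aq (A : Matrix (Fin n) (Fin n) ℤ) :
    (Aq A).charpoly = A.charpoly.map (Int.castRingHom ℚ) :=
  A.charpoly_map (Int.castRingHom ℚ)

/-- The subgroup `ℤ^n` of `ℚ^n`, which serves to express that a power of `A` clears the denominators
of a vector. -/
def intVectors (n : ℕ) : AddSubgroup (Fin n → ℚ) :=
  ((Int.castAddHom ℚ).compLeft (Fin n)).range

theorem Aq_pow_mulVec_mem_intVectors (A : Matrix (Fin n) (Fin n) ℤ) (s : ℕ) {v : Fin n → ℚ}
    (hv : v ∈ intVectors n) : Aq A ^ s *ᵥ v ∈ intVectors n := by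
  obtain ⟨x, rfl⟩ := hv
  have hpow : Aq A ^ s = Aq (A ^ s) := (map_pow (Int.castRingHom ℚ).mapMatrix A s).symm
  refine ⟨A ^ s *ᵥ x, ?_⟩
  rw [hpow]
  ext i
  exact (Int.castRingHom ℚ).map_mulVec (A ^ s) x i

theorem mem_GA_iff_eventually (hA : A.det ≠ 0) {v : Fin n → ℚ} :
    v ∈ GA A ↔ ∀ᶠ s : ℕ in atTop, Aq A ^ s *ᵥ v ∈ intVectors n := by
  have hunit := isUnit_det_Aq hA
  constructor
  · rintro ⟨k, x, rfl⟩
    filter_upwards [eventually_ge_atTop k.natAbs] with s hs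
    have hsk : Aq A ^ s * Aq A ^ k = Aq A ^ (s + k).toNat := by
      rw [← zpow_natCast, ← zpow_natCast, ← Matrix.zpow_add hunit, Int.toNat_of_nonneg (by omega)]
    rw [Matrix.mulVec_mulVec, hsk]
    exact Aq_pow_mulVec_mem_intVectors A _ ⟨x, rfl⟩
  · intro hv
    obtain ⟨s, x, hx⟩ := hv.exists
    have hx : Aq A ^ s *ᵥ v = fun i ↦ (x i : ℚ) := hx.symm
    refine ⟨-s, x, ?_⟩
    rw [← hx, Matrix.mulVec_mulVec, ← zpow_natCast, ← Matrix.zpow_add hunit, neg_add_cancel,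
      zpow_zero, Matrix.one_mulVec]

/-- `G_A` as a subgroup of `ℚ^n`. -/
def addSubgroupGA (hA : A.det ≠ 0) : AddSubgroup (Fin n → ℚ) where
  carrier := GA A
  add_mem' {v w} hv hw := by
    rw [mem_GA_iff_eventually hA] at *
    filter_upwards [hv, hw] with s hs ht
    rw [Matrix.mulVec_add]
    exact add_mem hs ht
  zero_mem' := ⟨0, 0, by ext; simp⟩
  neg_mem' {v} hv := by
    rw [mem_GA_iff_eventually hA] at *
    filter_upwards [hv] with s hs
    rw [Matrix.mulVec_neg]
    exact neg_mem hs

/-- The ring `End(G_A)` of rational matrices that map `G_A` into itself. -/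
def endGA (hA : A.det ≠ 0) : Subring (Matrix (Fin n) (Fin n) ℚ) :=
  matrixStabilizer (addSubgroupGA hA)

theorem exists_pow_mul_eq_mul_pow (hA : A.det ≠ 0) {T : Matrix (Fin n) (Fin n) ℚ}
    (hT : T ∈ endGA hA) (k : ℕ) :
    ∃ (s : ℕ) (Y : Matrix (Fin n) (Fin n) ℤ), Aq A ^ s * T = Aq Y * Aq A ^ k := by
  have hcol (j : Fin n) : T *ᵥ Aq A ^ (-k : ℤ) *ᵥ Pi.single j 1 ∈ GA A := by
    refine hT _ ⟨-k, Pi.single j 1, ?_⟩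
    congr 1
    ext i
    simp [Pi.single_apply]
  obtain ⟨s, hs⟩ := (eventually_all.2 fun j ↦ (mem_GA_iff_eventually hA).1 (hcol j)).exists
  choose x hx using hs
  have hY : Aq A ^ s * T * Aq A ^ (-k : ℤ) = Aq (Matrix.of fun i j ↦ x j i) := by
    ext i j
    have hij := congrFun (hx j) i
    rw [Matrix.mulVec_mulVec, Matrix.mulVec_mulVec, Matrix.mulVec_single_one] at hij
    exact hij.symm
  refine ⟨s, Matrix.of fun i j ↦ x j i, ?_⟩
  rw [← hY, mul_assoc, ← zpow_natCast (Aq A) k, ← Matrix.zpow_add (isUnit_det_Aq hA),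
    neg_add_cancel, zpow_zero, mul_one]

end MatrixGroup

section Commutation

open NumberField IsDedekindDomain

variable {n : ℕ} {A : Matrix (Fin n) (Fin n) ℤ} {T : Matrix (Fin n) (Fin n) ℚ}
  {L : Type*} [Field L] [NumberField L]

theorem valuation_lt_one_of_eigencomponent_ne_zero (hA : A.det ≠ 0) (hT : T ∈ endGA hA)
    (v : HeightOneSpectrum (𝓞 L)) {x y : L} (hx : x ∈ (Aq A).charpoly.rootSet L)
    (hy : y ∈ (Aq A).charpoly.rootSet L) (hxy : eigencomponent (Aq A) T x y ≠ 0)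
    (hvy : v.valuation L y < 1) : v.valuation L x < 1 := by
  have hint (Y : Matrix (Fin n) (Fin n) ℤ) (i j : Fin n) :
      v.valuation L ((Aq Y).map (algebraMap ℚ L) i j) ≤ 1 := by
    simpa [Aq] using v.valuation_le_one (K := L) (Y i j : 𝓞 L)
  have hclear (k : ℕ) : ∃ (s : ℕ) (Y : Matrix (Fin n) (Fin n) L),
      (∀ i j, v.valuation L (Y i j) ≤ 1) ∧ (Aq A).map (algebraMap ℚ L) ^ s *
        T.map (algebraMap ℚ L) = Y * (Aq A).map (algebraMap ℚ L) ^ k := by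
    obtain ⟨s, Y, hY⟩ := exists_pow_mul_eq_mul_pow hA hT k
    have hY := congrArg (algebraMap ℚ L).mapMatrix hY
    rw [map_mul, map_mul, map_pow, map_pow] at hY
    exact ⟨s, (Aq Y).map (algebraMap ℚ L), hint Y, hY⟩
  have hE := eigencofactor_mul (aeval_map_charpoly (L := L) (Aq A)) (isRoot_map_of_mem_rootSet hx)
  have hF := mul_eigencofactor (aeval_map_charpoly (L := L) (Aq A)) (isRoot_map_of_mem_rootSet hy)
  by_contra! hvx
  exact hxy (mul_mul_eq_zero_of_valuation_lt_one hE hF hvx hvy hclear)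

theorem eigencomponent_eq_zero_of_ne [Normal ℚ L] (hA : A.det ≠ 0)
    (hirr : Irreducible (Aq A).charpoly)
    (hsplits : ((Aq A).charpoly.map (algebraMap ℚ L)).Splits) {p : ℕ} (hp : p.Prime)
    (hcop : n.Coprime (tp A p)) (hT : T ∈ endGA hA) {x y : (Aq A).charpoly.rootSet L}
    (hxy : x ≠ y) : eigencomponent (Aq A) T (x : L) y = 0 := by
  classical
  obtain ⟨v, hv⟩ := exists_heightOneSpectrum_natCast_mem (L := L) hp
  have hprod : A.charpoly.map (Int.castRingHom L) =
      ∏ x : (Aq A).charpoly.rootSet L, (X - C (x : L)) := by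
    rw [← map_eq_prod_rootSet (Aq A).charpoly_monic hirr.separable hsplits, charpoly_Aq,
      Polynomial.map_map, RingHom.ext_int (RingHom.comp _ _)]
  have hcard : Fintype.card ((Aq A).charpoly.rootSet L) = n := by
    rw [card_rootSet_eq_natDegree hirr.separable hsplits, charpoly_natDegree_eq_dim,
      Fintype.card_fin]
  rw [tp_eq_card_valuation_lt_one A hp hv hprod] at hcop
  have hinv (g : Gal(L/ℚ)) {x y : (Aq A).charpoly.rootSet L}
      (h : eigencomponent (Aq A) T (x : L) y ≠ 0) :
      eigencomponent (Aq A) T (g • x : L) (g • y : L) ≠ 0 := by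
    have hmap := map_eigencomponent (Aq A) T (x : L) y g.toAlgHom
    exact fun h0 ↦ h (Matrix.map_injective g.injective
      (hmap.trans (h0.trans (Matrix.map_zero g (map_zero g)).symm)))
  have htrans := isPretransitive_rootSet (L := L) hirr
  by_contra hne
  refine hxy (eq_of_rel_of_coprime_card (G := Gal(L/ℚ))
    (r := fun x y : (Aq A).charpoly.rootSet L ↦ eigencomponent (Aq A) T (x : L) y ≠ 0) hinv ?_
    (by rwa [hcard]) hne)
  intro a b hab hb
  rw [Finset.mem_filter_univ] at hb ⊢
  exact valuation_lt_one_of_eigencomponent_ne_zero hA hT v a.2 b.2 hab hb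

theorem commute_of_mem_endGA (hA : A.det ≠ 0) (hirr : Irreducible (Aq A).charpoly) {p : ℕ}
    (hp : p.Prime) (hcop : n.Coprime (tp A p)) (hT : T ∈ endGA hA) : Commute (Aq A) T := by
  let L := (Aq A).charpoly.SplittingField
  have : NumberField L := ⟨⟩
  have : Normal ℚ L := SplittingField.instNormal _
  have hsplits : ((Aq A).charpoly.map (algebraMap ℚ L)).Splits := SplittingField.splits _
  have : Nonempty ((Aq A).charpoly.rootSet L) := by
    rw [← Fintype.card_pos_iff, card_rootSet_eq_natDegree hirr.separable hsplits]
    exact hirr.natDegree_pos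
  have hcomm := commute_of_eigencofactor_mul_mul_eq_zero Subtype.val_injective
    (map_eq_prod_rootSet (Aq A).charpoly_monic hirr.separable hsplits) (aeval_map_charpoly _)
    fun _ _ hxy ↦ eigencomponent_eq_zero_of_ne hA hirr hsplits hp hcop hT hxy
  refine Matrix.map_injective (algebraMap ℚ L).injective ?_
  simpa only [Matrix.map_mul] using hcomm.eq

end Commutation

section Centralizer

variable {F K ι : Type*} [Field F] [Field K] [Algebra F K] [Fintype ι] [DecidableEq ι]

theorem commute_of_adjoin_eq_top {S : Type*} [Semiring S] [Algebra F S] {x : K}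
    (hx : Algebra.adjoin F {x} = ⊤) {ψ : K →ₐ[F] S} {t : S} (ht : Commute (ψ x) t) (y : K) :
    Commute (ψ y) t := by
  have hle : Algebra.adjoin F {x} ≤ (Subalgebra.centralizer F {t}).comap ψ := by
    refine Algebra.adjoin_le (Set.singleton_subset_iff.2 ?_)
    rintro _ rfl
    exact ht.symm.eq
  have hy : y ∈ (Subalgebra.centralizer F {t}).comap ψ := hle (hx ▸ Algebra.mem_top)
  exact (hy t rfl).symm

theorem mem_range_of_forall_commute [Nonempty ι] (ψ : K →ₐ[F] Matrix ι ι F)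
    (hdim : Module.finrank F K = Fintype.card ι) {T : Matrix ι ι F} (hT : ∀ y, Commute (ψ y) T) :
    T ∈ ψ.range := by
  let e : ι → F := Pi.single (Classical.arbitrary ι) 1
  let orbit : K →ₗ[F] ι → F := (Matrix.mulVecBilin F F).flip e ∘ₗ ψ.toLinearMap
  have horbit (y : K) : orbit y = ψ y *ᵥ e := rfl
  have hinj : Function.Injective orbit := by
    refine (injective_iff_map_eq_zero orbit).2 fun y hy ↦ by_contra fun hne ↦ ?_
    have he : e = 0 := by
      calc
        e = ψ (y⁻¹ * y) *ᵥ e := by rw [inv_mul_cancel₀ hne, map_one, Matrix.one_mulVec]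
        _ = ψ y⁻¹ *ᵥ orbit y := by rw [map_mul, horbit, Matrix.mulVec_mulVec]
        _ = 0 := by rw [hy, Matrix.mulVec_zero]
    exact one_ne_zero (Pi.single_eq_zero_iff.1 he)
  have : FiniteDimensional F K :=
    Module.finite_of_finrank_pos (hdim ▸ Fintype.card_pos)
  have hsurj : Function.Surjective orbit :=
    (LinearMap.injective_iff_surjective_of_finrank_eq_finrank
      (hdim.trans (Module.finrank_fintype_fun_eq_card F).symm)).1 hinj
  obtain ⟨x, hx⟩ := hsurj (T *ᵥ e)
  refine ⟨x, Matrix.ext_of_mulVec_single fun i ↦ ?_⟩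
  obtain ⟨y, hy⟩ := hsurj (Pi.single i 1)
  calc
    ψ x *ᵥ Pi.single i 1 = ψ y *ᵥ orbit x := by
      rw [← hy, horbit, horbit, Matrix.mulVec_mulVec, Matrix.mulVec_mulVec, ← map_mul, ← map_mul,
        mul_comm]
    _ = T *ᵥ Pi.single i 1 := by
      rw [hx, ← hy, horbit, Matrix.mulVec_mulVec, Matrix.mulVec_mulVec, (hT y).eq]

theorem exists_ringHom_of_le_range {S : Type*} [Ring S] [Algebra F S]
    {ψ : K →ₐ[F] S} (hψ : Function.Injective ψ) {E : Subring S} (hE : ∀ t ∈ E, t ∈ ψ.range) :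
    ∃ φ : E →+* K, ∀ t, ψ (φ t) = t := by
  let e : K ≃ₐ[F] ψ.range := AlgEquiv.ofInjective ψ hψ
  refine ⟨(e.symm : ψ.range →+* K).comp (E.subtype.codRestrict ψ.range fun t ↦ hE t t.2),
    fun t ↦ ?_⟩
  exact congrArg Subtype.val (e.apply_symm_apply ⟨t, hE t t.2⟩)

theorem exists_ringHom_of_forall_commute {M : Matrix ι ι F} (hirr : Irreducible M.charpoly) {x : K}
    (hroot : aeval x M.charpoly = 0) (hgen : Algebra.adjoin F {x} = ⊤)
    {E : Subring (Matrix ι ι F)} (hE : ∀ T ∈ E, Commute M T) :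
    ∃ ψ : K →ₐ[F] Matrix ι ι F, Function.Injective ψ ∧ ψ x = M ∧
      ∃ φ : E →+* K, ∀ T, ψ (φ T) = T := by
  have hnonempty : Nonempty ι := by
    rw [← Fintype.card_pos_iff, ← M.charpoly_natDegree_eq_dim]
    exact hirr.natDegree_pos
  have hmin : minpoly F x = M.charpoly :=
    (minpoly.eq_of_irreducible_of_monic hirr hroot M.charpoly_monic).symm
  let pb := PowerBasis.ofAdjoinEqTop ⟨M.charpoly, M.charpoly_monic, hroot⟩ hgen
  have hpb : pb.gen = x := PowerBasis.ofAdjoinEqTop_gen _ hgen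
  have hdim : Module.finrank F K = Fintype.card ι := by
    rw [pb.finrank, ← pb.natDegree_minpoly, hpb, hmin, M.charpoly_natDegree_eq_dim]
  have hann : aeval M (minpoly F pb.gen) = 0 := by rw [hpb, hmin, M.aeval_self_charpoly]
  let ψ : K →ₐ[F] Matrix ι ι F := pb.lift M hann
  have hψx : ψ x = M := hpb ▸ pb.lift_gen M hann
  have hψ : Function.Injective ψ := ψ.toRingHom.injective
  exact ⟨ψ, hψ, hψx, exists_ringHom_of_le_range hψ fun T hT ↦
    mem_range_of_forall_commute ψ hdim (commute_of_adjoin_eq_top hgen (hψx ▸ hE T hT))⟩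

end Centralizer

theorem exists_isIntegral_pow_mul {n : ℕ} {A : Matrix (Fin n) (Fin n) ℤ} (hA : A.det ≠ 0)
    {K : Type*} [Field K] [Algebra ℚ K] {ψ : K →ₐ[ℚ] Matrix (Fin n) (Fin n) ℚ}
    (hψ : Function.Injective ψ) {lam : K} (hlam : ψ lam = Aq A) {x : K} (hx : ψ x ∈ endGA hA) :
    ∃ k : ℕ, IsIntegral ℤ (lam ^ k * x) := by
  obtain ⟨s, Y, hY⟩ := exists_pow_mul_eq_mul_pow hA hx 0
  have hclear : ψ.restrictScalars ℤ (lam ^ s * x) = Aq Y := by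
    rw [AlgHom.restrictScalars_apply, map_mul, map_pow, hlam, hY, pow_zero, mul_one]
  refine ⟨s, (isIntegral_algHom_iff (ψ.restrictScalars ℤ) hψ).1 ?_⟩
  rw [hclear]
  exact (Matrix.isIntegral Y).map (Algebra.ofId ℤ ℚ).mapMatrix

/-- `End(G_A)` is a subring of `M_n(ℚ)` which embeds into `K = ℚ(λ)`,
taking `A` to `λ`, with image inside `O_{K,λ} = O_K[λ⁻¹]`, and sending automorphisms of
`G_A` to `S_λ`-units. -/
theorem stmt6 (n : ℕ) (A : Matrix (Fin n) (Fin n) ℤ) (hA : A.det ≠ 0)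
    (hirr : Irreducible (A.charpoly.map (Int.castRingHom ℚ)))
    (hP' : (Pbad A).Nonempty)
    (hcop : ∃ p : ℕ, p.Prime ∧ Nat.gcd n (tp A p) = 1)
    (K : Type) [Field K] [NumberField K] (lam : K)
    (hint : IsIntegral ℤ lam)
    (hroot : Polynomial.aeval lam (A.charpoly.map (Int.castRingHom ℚ)) = 0)
    (hgenK : Algebra.adjoin ℚ ({lam} : Set K) = ⊤) :
    ∃ S : Subring (Matrix (Fin n) (Fin n) ℚ),
      (S : Set (Matrix (Fin n) (Fin n) ℚ)) = {T | ∀ v ∈ GA A, T *ᵥ v ∈ GA A} ∧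
      ∃ ι : S →+* K, Function.Injective ι ∧
        (∀ h : Aq A ∈ S, ι ⟨Aq A, h⟩ = lam) ∧
        (∀ T : S, ∃ k : ℕ, IsIntegral ℤ (lam ^ k * ι T)) ∧
        (∀ T : S, IsUnit (T : Matrix (Fin n) (Fin n) ℚ) →
          (fun w => (T : Matrix (Fin n) (Fin n) ℚ) *ᵥ w) '' GA A = GA A →
          (∃ k : ℕ, IsIntegral ℤ (lam ^ k * ι T)) ∧
          (∃ k : ℕ, IsIntegral ℤ (lam ^ k * (ι T)⁻¹))) := by
  obtain ⟨p, hp, hcop⟩ := hcop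
  rw [← charpoly_Aq] at hirr hroot
  obtain ⟨ψ, hψ, hlam, ι, hι⟩ := exists_ringHom_of_forall_commute hirr hroot hgenK
    fun T hT ↦ commute_of_mem_endGA hA hirr hp hcop hT
  have hintegral (T : endGA hA) : ∃ k : ℕ, IsIntegral ℤ (lam ^ k * ι T) :=
    exists_isIntegral_pow_mul hA hψ hlam ((hι T).symm ▸ T.2)
  refine ⟨endGA hA, rfl, ι, fun S T hST ↦ Subtype.ext ?_, fun h ↦ hψ ?_, hintegral,
    fun T hT hTG ↦ ⟨hintegral T, ?_⟩⟩
  · rw [← hι S, hST, hι]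
  · rw [hι, hlam]
  · have hdet := (Matrix.isUnit_iff_isUnit_det _).1 hT
    let U : endGA hA := ⟨T⁻¹, inv_mem_matrixStabilizer hT hTG⟩
    have hUT : U * T = 1 := Subtype.ext (Matrix.nonsing_inv_mul _ hdet)
    have hinv : ι U = (ι T)⁻¹ := eq_inv_of_mul_eq_one_left (by rw [← map_mul, hUT, map_one])
    exact hinv ▸ hintegral U
end
end

section
/- Let A ∈ M_n(ℤ) be non-singular with h_A irreducible over ℚ and P'(A) ≠ ∅, and assume there exists a prime p with gcd(n, t_p) = 1. Then: (a) any two matrices S, T ∈ M_n(ℚ) each mapping G_A into G_A commute, so End(G_A) is a commutative ring; and (b) the group Aut(G_A) = {T ∈ M_n(ℚ) : T invertible and T(G_A) = G_A} (a group under matrix multiplication) is a finitely generated abelian group. -/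
open Matrix Polynomial

noncomputable section

/-! Let `E = ℚ ⊗ End(G_A)`, acting on `V = ℚ^n`. It contains `A`, whose characteristic polynomial
is irreducible, so `V` is a simple `E`-module and `F = End_E V`, which commutes with `A`, is a field
inside `ℚ[A]`. By density `E = End_F V`, hence `G_A` is, up to finite index, a power `H^d` with
`d = dim_F V`. Clearly `d ∣ n`; moreover `p^(n - t_p) = [G_A : p G_A] = [H : p H]^d`, so
`d ∣ n - t_p`. If `gcd(n, t_p) = 1` then `d = 1`, so `E = F` is commutative and contained in `ℚ[A]`.
The elements of `Aut(G_A)` and their inverses have only powers of `det A` as denominators, so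
`Aut(G_A)` embeds in a group of `S`-units of the number field `ℚ[A]`, which is finitely generated by
Dirichlet's unit theorem. -/

section NSMulIndex

/-- The index `[M : nM]` of the subgroup of `n`-fold multiples, with the junk value `0` when it is
infinite. It is used as an invariant of torsion-free groups up to finite index. -/
def nsmulIndex (M : Type*) [AddCommGroup M] (n : ℕ) : ℕ :=
  (nsmulAddMonoidHom (α := M) n).range.index

lemma nsmulIndex_pi {ι : Type*} [Fintype ι] (M : Type*) [AddCommGroup M] (n : ℕ) :
    nsmulIndex (ι → M) n = nsmulIndex M n ^ Fintype.card ι := by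
  have hrange : (nsmulAddMonoidHom (α := ι → M) n).range =
      AddSubgroup.pi Set.univ fun _ => (nsmulAddMonoidHom (α := M) n).range := by
    ext x
    simp [AddSubgroup.mem_pi, funext_iff, Classical.skolem]
  simp [nsmulIndex, hrange, AddSubgroup.index_pi]

lemma index_range_eq_of_comp_eq {M N : Type*} [AddCommGroup M] [AddCommGroup N]
    {f : M →+ N} {φ : M →+ M} {ψ : N →+ N} (hf : Function.Injective f)
    (hψ : Function.Injective ψ) [f.range.FiniteIndex] (h : f.comp φ = ψ.comp f) :
    φ.range.index = ψ.range.index := by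
  have hrange : φ.range.map f = f.range.map ψ := by
    rw [← AddMonoidHom.range_comp, ← AddMonoidHom.range_comp, h]
  refine Nat.eq_of_mul_eq_mul_right
    (Nat.pos_of_ne_zero (AddSubgroup.FiniteIndex.index_ne_zero (H := f.range))) ?_
  rw [← AddSubgroup.index_map_of_injective _ hf, hrange,
    AddSubgroup.index_map_of_injective _ hψ, mul_comm]

lemma nsmulIndex_eq_of_injective {M N : Type*} [AddCommGroup M] [AddCommGroup N]
    [IsAddTorsionFree N] {f : M →+ N} (hf : Function.Injective f) [f.range.FiniteIndex]
    {n : ℕ} (hn : n ≠ 0) : nsmulIndex M n = nsmulIndex N n :=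
  index_range_eq_of_comp_eq hf (nsmul_right_injective hn)
    (AddMonoidHom.ext fun x => map_nsmul f n x)

lemma exists_common_nsmul_mem {V ι : Type*} [AddCommGroup V] [Finite ι] {G : AddSubgroup V}
    {f : ι → V → V} (hf : ∀ i, ∃ N : ℕ, N ≠ 0 ∧ ∀ g ∈ G, N • f i g ∈ G) :
    ∃ N : ℕ, N ≠ 0 ∧ ∀ i, ∀ g ∈ G, N • f i g ∈ G := by
  have := Fintype.ofFinite ι
  choose N hN0 hN using hf
  refine ⟨∏ i, N i, Finset.prod_ne_zero_iff.2 fun i _ => hN0 i, fun i g hg => ?_⟩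
  obtain ⟨c, hc⟩ := Finset.dvd_prod_of_mem N (Finset.mem_univ i)
  rw [hc, mul_comm, mul_smul]
  exact G.nsmul_mem (hN i g hg) c

/-- `H = {c | ∀ i, c • b i ∈ G}` embeds `H ^ d` into `G`, and the image contains `N • G` as soon as
`N` clears the denominators of the matrix units of the basis `b`. -/
lemma exists_nsmulIndex_eq_pow_finrank {F V : Type*} [DivisionRing F] [AddCommGroup V]
    [IsAddTorsionFree V] [Module F V] [Module.Finite F V] {G : AddSubgroup V}
    (hG : ∀ N : ℕ, N ≠ 0 → nsmulIndex G N ≠ 0)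
    (hend : ∀ f : Module.End F V, ∃ N : ℕ, N ≠ 0 ∧ ∀ g ∈ G, N • f g ∈ G) :
    ∃ H : AddSubgroup F, ∀ n : ℕ, n ≠ 0 →
      nsmulIndex G n = nsmulIndex H n ^ Module.finrank F V := by
  let b := Module.finBasis F V
  let H : AddSubgroup F := ⨅ i, G.comap (LinearMap.toSpanSingleton F V (b i)).toAddMonoidHom
  have mem_H {c : F} : c ∈ H ↔ ∀ i, c • b i ∈ G := by simp [H, AddSubgroup.mem_iInf]
  let f : (Fin (Module.finrank F V) → H) →+ G :=
    (b.equivFun.symm.toLinearMap.toAddMonoidHom.comp (H.subtype.compLeft _)).codRestrict G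
      fun x => by
        change b.equivFun.symm (fun i => (x i : F)) ∈ G
        rw [Module.Basis.equivFun_symm_apply]
        exact G.sum_mem fun i _ => mem_H.1 (x i).2 i
  have hf : Function.Injective f := fun x y hxy => funext fun i =>
    Subtype.ext (congrFun (b.equivFun.symm.injective (congrArg Subtype.val hxy)) i)
  obtain ⟨N, hN0, hN⟩ := exists_common_nsmul_mem
    fun ij : Fin _ × Fin _ => hend ((b.coord ij.1).smulRight (b ij.2))
  have hrange : (nsmulAddMonoidHom (α := G) N).range ≤ f.range := by
    rintro _ ⟨g, rfl⟩
    refine ⟨fun i => ⟨N • b.repr g i, mem_H.2 fun j => ?_⟩, Subtype.ext ?_⟩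
    · rw [smul_assoc]
      exact hN (i, j) g g.2
    · change b.equivFun.symm (N • b.equivFun (g : V)) = N • (g : V)
      rw [map_nsmul, LinearEquiv.symm_apply_apply]
  have : (nsmulAddMonoidHom (α := G) N).range.FiniteIndex := ⟨hG N hN0⟩
  have : f.range.FiniteIndex := AddSubgroup.finiteIndex_of_le hrange
  refine ⟨H, fun n hn => ?_⟩
  rw [← nsmulIndex_eq_of_injective hf hn, nsmulIndex_pi, Fintype.card_fin]

end NSMulIndex

section IrreducibleCharpoly

variable {k V : Type*} [Field k] [AddCommGroup V] [Module k V] [FiniteDimensional k V]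
  {a : Module.End k V}

/-- Evaluation at `a`, as an action on `V` of the algebra `k[x]/(χ_a)`. The latter is a field when
the characteristic polynomial `χ_a` is irreducible. -/
def aevalAdjoinRoot (a : Module.End k V) : AdjoinRoot a.charpoly →ₐ[k] Module.End k V :=
  Ideal.Quotient.liftₐ (Ideal.span {a.charpoly}) (aeval a) fun q hq => by
    obtain ⟨r, rfl⟩ := Ideal.mem_span_singleton'.1 hq
    rw [map_mul, a.aeval_self_charpoly, mul_zero]

lemma aevalAdjoinRoot_mem {E : Subalgebra k (Module.End k V)} (ha : a ∈ E)
    (c : AdjoinRoot a.charpoly) : aevalAdjoinRoot a c ∈ E := by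
  obtain ⟨q, rfl⟩ := AdjoinRoot.mk_surjective c
  exact Algebra.adjoin_le (Set.singleton_subset_iff.2 ha) (aeval_mem_adjoin_singleton k a)

lemma commute_aevalAdjoinRoot {T : Module.End k V} (hT : Commute T a)
    (c : AdjoinRoot a.charpoly) : Commute T (aevalAdjoinRoot a c) := by
  obtain ⟨q, rfl⟩ := AdjoinRoot.mk_surjective c
  exact Algebra.commute_of_mem_adjoin_singleton_of_commute (aeval_mem_adjoin_singleton k a) hT

omit [FiniteDimensional k V] in
lemma commute_restrictScalars {E : Subalgebra k (Module.End k V)} (ha : a ∈ E)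
    (c : Module.End E V) : Commute (c.restrictScalars k) a :=
  LinearMap.ext fun v => c.map_smul (⟨a, ha⟩ : E) v

variable (hirr : Irreducible a.charpoly)
include hirr

lemma exists_aevalAdjoinRoot_apply_eq {v : V} (hv : v ≠ 0) (w : V) :
    ∃ c, aevalAdjoinRoot a c v = w := by
  have : Fact (Irreducible a.charpoly) := ⟨hirr⟩
  let orbit : AdjoinRoot a.charpoly →ₗ[k] V :=
    (LinearMap.applyₗ v).comp (aevalAdjoinRoot a).toLinearMap
  have hinj : Function.Injective orbit := by
    refine (injective_iff_map_eq_zero orbit).2 fun c hc => by_contra fun hc0 => hv ?_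
    calc v = aevalAdjoinRoot a (c⁻¹ * c) v := by rw [inv_mul_cancel₀ hc0, map_one]; rfl
      _ = aevalAdjoinRoot a c⁻¹ (orbit c) := by rw [map_mul]; rfl
      _ = 0 := by rw [hc, map_zero]
  have := (AdjoinRoot.powerBasis hirr.ne_zero).finite
  have hdim : Module.finrank k (AdjoinRoot a.charpoly) = Module.finrank k V := by
    rw [(AdjoinRoot.powerBasis hirr.ne_zero).finrank, AdjoinRoot.powerBasis_dim,
      a.charpoly_natDegree]
  exact (LinearMap.injective_iff_surjective_of_finrank_eq_finrank hdim).1 hinj w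

lemma mem_range_aevalAdjoinRoot_of_commute {T : Module.End k V} (hT : Commute T a) :
    T ∈ (aevalAdjoinRoot a).range := by
  obtain hV | hV := subsingleton_or_nontrivial V
  · exact ⟨0, Subsingleton.elim _ _⟩
  obtain ⟨v, hv⟩ := exists_ne (0 : V)
  obtain ⟨c, hc⟩ := exists_aevalAdjoinRoot_apply_eq hirr hv (T v)
  refine ⟨c, LinearMap.ext fun w => ?_⟩
  obtain ⟨r, rfl⟩ := exists_aevalAdjoinRoot_apply_eq hirr hv w
  calc aevalAdjoinRoot a c (aevalAdjoinRoot a r v)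
      = aevalAdjoinRoot a r (aevalAdjoinRoot a c v) := by
        rw [← Module.End.mul_apply, ← map_mul, mul_comm, map_mul, Module.End.mul_apply]
    _ = T (aevalAdjoinRoot a r v) := by
        rw [hc]
        exact (LinearMap.congr_fun (commute_aevalAdjoinRoot hT r) v).symm

lemma commute_of_commute_of_commute {S T : Module.End k V} (hS : Commute S a)
    (hT : Commute T a) : Commute S T := by
  obtain ⟨c, rfl⟩ := mem_range_aevalAdjoinRoot_of_commute hirr hS
  exact (commute_aevalAdjoinRoot hT c).symm

lemma isSimpleModule_of_irreducible_charpoly [Nontrivial V] {E : Subalgebra k (Module.End k V)}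
    (ha : a ∈ E) : IsSimpleModule E V := by
  refine isSimpleModule_iff_toSpanSingleton_surjective.2 ⟨inferInstance, fun v hv w => ?_⟩
  obtain ⟨c, hc⟩ := exists_aevalAdjoinRoot_apply_eq hirr hv w
  exact ⟨⟨aevalAdjoinRoot a c, aevalAdjoinRoot_mem ha c⟩, hc⟩

lemma commute_of_finrank_end_eq_one {E : Subalgebra k (Module.End k V)} (ha : a ∈ E)
    (hdim : Module.finrank (Module.End E V) V = 1) {S T : Module.End k V} (hS : S ∈ E)
    (hT : T ∈ E) : Commute S T := by
  classical
  obtain hV | hV := subsingleton_or_nontrivial V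
  · exact Subsingleton.elim _ _
  have := isSimpleModule_of_irreducible_charpoly hirr ha
  let _ : DivisionRing (Module.End E V) := Module.End.instDivisionRing
  have smul_comm (c c' : Module.End E V) (v : V) : c • c' • v = c' • c • v :=
    LinearMap.congr_fun (commute_of_commute_of_commute hirr (commute_restrictScalars ha c)
      (commute_restrictScalars ha c')).eq v
  have apply_smul {e : Module.End k V} (he : e ∈ E) (c : Module.End E V) (v : V) :
      e (c • v) = c • e v := (c.map_smul (⟨e, he⟩ : E) v).symm
  obtain ⟨b, -, hb⟩ := finrank_eq_one_iff'.1 hdim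
  obtain ⟨s, hs⟩ := hb (S b)
  obtain ⟨t, ht⟩ := hb (T b)
  refine LinearMap.ext fun v => ?_
  obtain ⟨c, rfl⟩ := hb v
  calc S (T (c • b)) = c • t • s • b := by
        rw [apply_smul hT, apply_smul hS, ← ht, apply_smul hS, hs]
    _ = c • s • t • b := by rw [smul_comm t s]
    _ = T (S (c • b)) := by
        rw [apply_smul hS, apply_smul hT, ← hs, apply_smul hT, ht]

end IrreducibleCharpoly

section QuasiEndomorphisms

variable {V : Type*} [AddCommGroup V] [Module ℚ V]

/-- The algebra `ℚ ⊗ End G` of quasi-endomorphisms of a subgroup `G` of a rational vector space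
`V`, realised as the endomorphisms of `V` a nonzero multiple of which preserves `G`. -/
def quasiEnd (G : AddSubgroup V) : Subalgebra ℚ (Module.End ℚ V) where
  carrier := {e | ∃ N : ℕ, N ≠ 0 ∧ ∀ g ∈ G, N • e g ∈ G}
  mul_mem' := by
    rintro e f ⟨N, hN, he⟩ ⟨M, hM, hf⟩
    refine ⟨N * M, mul_ne_zero hN hM, fun g hg => ?_⟩
    rw [Module.End.mul_apply, mul_smul, ← map_nsmul]
    exact he _ (hf g hg)
  add_mem' := by
    rintro e f ⟨N, hN, he⟩ ⟨M, hM, hf⟩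
    refine ⟨N * M, mul_ne_zero hN hM, fun g hg => ?_⟩
    rw [LinearMap.add_apply, smul_add]
    refine G.add_mem ?_ ?_
    · rw [mul_comm, mul_smul]
      exact G.nsmul_mem (he g hg) M
    · rw [mul_smul]
      exact G.nsmul_mem (hf g hg) N
  algebraMap_mem' q := by
    refine ⟨q.den, q.den_ne_zero, fun g hg => ?_⟩
    rw [Module.algebraMap_end_apply, ← Nat.cast_smul_eq_nsmul ℚ, smul_smul, Rat.den_mul_eq_num,
      Int.cast_smul_eq_zsmul]
    exact G.zsmul_mem hg _

lemma mem_quasiEnd_of_mapsTo {G : AddSubgroup V} {e : Module.End ℚ V}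
    (he : Set.MapsTo e G G) : e ∈ quasiEnd G :=
  ⟨1, one_ne_zero, fun g hg => by simpa using he hg⟩

variable [FiniteDimensional ℚ V] {G : AddSubgroup V} (hG : ∀ N : ℕ, N ≠ 0 → nsmulIndex G N ≠ 0)
  {p s : ℕ} (hp : p.Prime) (hs : nsmulIndex G p = p ^ s)
include hG hp hs

/-- By the density theorem every endomorphism of `V` linear over the division ring
`End_E V`, `E = quasiEnd G`, lies in `E`. -/
lemma finrank_end_quasiEnd_dvd [IsSimpleModule (quasiEnd G) V] :
    Module.finrank (Module.End (quasiEnd G) V) V ∣ s := by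
  classical
  let F := Module.End (quasiEnd G) V
  let _ : DivisionRing F := Module.End.instDivisionRing
  have : IsScalarTower ℚ F V := ⟨fun _ _ _ => rfl⟩
  have : Module.Finite F V := Module.Finite.of_restrictScalars_finite ℚ F V
  have : Nontrivial V := IsSimpleModule.nontrivial (quasiEnd G) V
  have : IsAddTorsionFree V := IsAddTorsionFree.of_module_rat V
  have hend (f : Module.End F V) : ∃ N : ℕ, N ≠ 0 ∧ ∀ g ∈ G, N • f g ∈ G := by
    obtain ⟨e, rfl⟩ :=
      Module.Finite.toModuleEnd_moduleEnd_surjective (R := quasiEnd G) (M := V) f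
    exact e.2
  obtain ⟨H, hH⟩ := exists_nsmulIndex_eq_pow_finrank hG hend
  have hpow : p ^ s = nsmulIndex H p ^ Module.finrank F V := hs ▸ hH p hp.ne_zero
  obtain ⟨r, -, hr⟩ := (Nat.dvd_prime_pow hp).1
    (hpow ▸ dvd_pow_self (nsmulIndex H p) (Module.finrank_pos (R := F) (M := V)).ne')
  rw [hr, ← pow_mul] at hpow
  exact ⟨r, (Nat.pow_right_injective hp.two_le hpow).trans (mul_comm _ _)⟩

theorem commute_of_mem_quasiEnd {a : Module.End ℚ V} (hirr : Irreducible a.charpoly)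
    (ha : a ∈ quasiEnd G) (hcop : (Module.finrank ℚ V).Coprime s) {S T : Module.End ℚ V}
    (hS : S ∈ quasiEnd G) (hT : T ∈ quasiEnd G) : Commute S T := by
  classical
  obtain hV | hV := subsingleton_or_nontrivial V
  · exact Subsingleton.elim _ _
  have := isSimpleModule_of_irreducible_charpoly hirr ha
  let F := Module.End (quasiEnd G) V
  let _ : DivisionRing F := Module.End.instDivisionRing
  have : IsScalarTower ℚ F V := ⟨fun _ _ _ => rfl⟩
  have hdim : Module.finrank F V ∣ Module.finrank ℚ V :=
    Module.finrank_dvd_finrank_left (F := ℚ) (K := F) (A := V)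
  exact commute_of_finrank_end_eq_one hirr ha
    (Nat.eq_one_of_dvd_coprimes hcop hdim (finrank_end_quasiEnd_dvd hG hp hs)) hS hT

end QuasiEndomorphisms

section SUnits

open IsDedekindDomain NumberField

lemma exists_units_map_eq_of_forall_valuation_eq_one {R K : Type*} [CommRing R]
    [IsDedekindDomain R] [Field K] [Algebra R K] [IsFractionRing R K] {u : Kˣ}
    (hu : ∀ v : HeightOneSpectrum R, v.valuation K (u : K) = 1) :
    ∃ x : Rˣ, Units.map (algebraMap R K).toMonoidHom x = u := by
  obtain ⟨x, hx⟩ := HeightOneSpectrum.mem_integers_of_valuation_le_one K (u : K)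
    fun v => (hu v).le
  obtain ⟨y, hy⟩ := HeightOneSpectrum.mem_integers_of_valuation_le_one K ((u⁻¹ : Kˣ) : K)
    fun v => by rw [Units.val_inv_eq_inv_val, map_inv₀, hu v, inv_one]
  have hxy : x * y = 1 := by
    apply FaithfulSMul.algebraMap_injective R K
    rw [map_mul, hx, hy, map_one, Units.mul_inv]
  exact ⟨⟨x, y, hxy, mul_comm x y ▸ hxy⟩, Units.ext hx⟩

/-- The valuations at the primes in `S` embed the quotient of the `S`-units by `Rˣ` into `ℤ ^ S`. -/
theorem isNoetherian_additive_sUnit {R : Type*} [CommRing R] [IsDedekindDomain R]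
    [IsNoetherian ℤ (Additive Rˣ)] (K : Type*) [Field K] [Algebra R K] [IsFractionRing R K]
    (S : Set (HeightOneSpectrum R)) [Finite S] : IsNoetherian ℤ (Additive (S.unit K)) := by
  have hval (v : HeightOneSpectrum R) (x : Rˣ) :
      v.valuation K (Units.map (algebraMap R K).toMonoidHom x : K) = 1 :=
    (v.valuationOfNeZero_eq _).symm.trans (congrArg _ (v.valuation_of_unit_eq x))
  let incl : Rˣ →* S.unit K := (Units.map (algebraMap R K).toMonoidHom).codRestrict _
    fun x v _ => hval v x
  let val : S.unit K →* (S → Multiplicative ℤ) := MonoidHom.pi fun v =>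
    v.1.valuationOfNeZero.comp (S.unit K).subtype
  have hexact : incl.range = val.ker := by
    ext u
    constructor
    · rintro ⟨x, rfl⟩
      exact funext fun v => v.1.valuation_of_unit_eq x
    · intro hu
      obtain ⟨x, hx⟩ := exists_units_map_eq_of_forall_valuation_eq_one (R := R) (u := u.1)
        fun v => by
          by_cases hv : v ∈ S
          · rw [← v.valuationOfNeZero_eq, show v.valuationOfNeZero u.1 = 1 from
              congrFun hu ⟨v, hv⟩, WithZero.coe_one]
          · exact u.2 v hv
      exact ⟨x, Subtype.ext hx⟩
  have : IsNoetherian ℤ (Additive (S → Multiplicative ℤ)) :=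
    inferInstanceAs (IsNoetherian ℤ (S → ℤ))
  refine isNoetherian_of_range_eq_ker incl.toAdditive.toIntLinearMap
    val.toAdditive.toIntLinearMap (SetLike.ext fun u => ?_)
  exact SetLike.ext_iff.1 hexact u.toMul

lemma valuation_eq_one_of_isIntegral {R K : Type*} [CommRing R] [IsDedekindDomain R] [Field K]
    [Algebra R K] [IsFractionRing R K] {m : R} {U : Subgroup Kˣ}
    (hU : ∀ u ∈ U, ∃ r : ℕ, IsIntegral R (algebraMap R K m ^ r * (u : K)))
    {v : HeightOneSpectrum R} (hv : m ∉ v.asIdeal) {u : Kˣ} (hu : u ∈ U) :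
    v.valuation K (u : K) = 1 := by
  have hle {w : Kˣ} (hw : w ∈ U) : v.valuation K (w : K) ≤ 1 := by
    obtain ⟨r, hr⟩ := hU w hw
    obtain ⟨y, hy⟩ := IsIntegrallyClosed.isIntegral_iff.1 hr
    have : v.valuation K (algebraMap R K y) ≤ 1 := v.valuation_le_one y
    rwa [hy, map_mul, map_pow, (v.valuation_eq_one_iff_notMem (K := K)).2 hv, one_pow,
      one_mul] at this
  refine eq_one_of_one_le_mul_left (hle hu) (hle (U.inv_mem hu)) ?_
  rw [← map_mul, Units.mul_inv, map_one]

theorem fg_units_of_isIntegral_pow_mul {R K : Type*} [CommRing R] [IsDedekindDomain R]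
    [IsNoetherian ℤ (Additive Rˣ)] [Field K] [Algebra R K] [IsFractionRing R K] {m : R}
    (hm : m ≠ 0) {U : Subgroup Kˣ}
    (hU : ∀ u ∈ U, ∃ r : ℕ, IsIntegral R (algebraMap R K m ^ r * (u : K))) : Group.FG U := by
  let S : Set (HeightOneSpectrum R) := {v | m ∈ v.asIdeal}
  have : Finite S := by
    refine ((Ideal.finite_factors (I := Ideal.span {m}) ?_).subset
      fun v hv => Ideal.dvd_span_singleton.2 hv).to_subtype
    simpa using hm
  have hUS : U ≤ S.unit K := fun u hu v hv => valuation_eq_one_of_isIntegral hU hv hu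
  have := isNoetherian_additive_sUnit K S
  have : IsNoetherian ℤ (Additive U) :=
    isNoetherian_of_injective (Subgroup.inclusion hUS).toAdditive.toIntLinearMap
      (Subgroup.inclusion_injective hUS)
  exact GroupFG.iff_add_fg.2 (Module.Finite.iff_addGroup_fg.1 inferInstance)

theorem fg_units_of_le_range_of_isIntegral_pow_mul {K R : Type*} [Field K] [NumberField K] [Ring R]
    [Nontrivial R] (ψ : K →+* R) {m : ℤ} (hm : m ≠ 0) {H : Subgroup Rˣ}
    (hrange : ∀ T ∈ H, (T : R) ∈ ψ.range)
    (hint : ∀ T ∈ H, ∃ r : ℕ, IsIntegral ℤ ((m : R) ^ r * (T : R))) : Group.FG H := by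
  let Ψ : Kˣ →* Rˣ := Units.map ψ.toMonoidHom
  have hfg : Group.FG (H.comap Ψ) := by
    refine fg_units_of_isIntegral_pow_mul (R := 𝓞 K) (m := m) (Int.cast_ne_zero.2 hm)
      fun u hu => ?_
    obtain ⟨r, hr⟩ := hint _ hu
    refine ⟨r, ((isIntegral_algHom_iff ψ.toIntAlgHom ψ.injective).1 ?_).tower_top⟩
    simpa [Ψ] using hr
  have hle : H ≤ Ψ.range := fun T hT => by
    obtain ⟨c, hc⟩ := hrange T hT
    have hc0 : c ≠ 0 := by
      rintro rfl
      exact T.ne_zero (hc.symm.trans (map_zero ψ))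
    exact ⟨Units.mk0 c hc0, Units.ext hc⟩
  rw [← Subgroup.map_comap_eq_self hle, ← Subgroup.range_subtype (H.comap Ψ),
    ← MonoidHom.range_comp]
  exact Group.fg_range _

end SUnits

section IntCastVec

variable {ι : Type*} (R : Type*) [Ring R]

/-- The coordinatewise map `ℤ^ι → R^ι`: the inclusion of the standard lattice for `R = ℚ`, the
reduction modulo `N` for `R = ZMod N`. -/
def intCastVec : (ι → ℤ) →+ (ι → R) :=
  (Int.castAddHom R).compLeft ι

lemma intCastVec_injective [CharZero R] : Function.Injective (intCastVec (ι := ι) R) :=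
  Int.cast_injective.comp_left

lemma intCastVec_zmod_surjective (N : ℕ) :
    Function.Surjective (intCastVec (ι := ι) (ZMod N)) :=
  ZMod.intCast_surjective.comp_left

lemma intCastVec_zmod_eq_zero_iff {N : ℕ} {x : ι → ℤ} :
    intCastVec (ZMod N) x = 0 ↔ ∃ z, x = N • z := by
  calc intCastVec (ZMod N) x = 0 ↔ ∀ i, (N : ℤ) ∣ x i :=
        funext_iff.trans (forall_congr' fun i => ZMod.intCast_zmod_eq_zero_iff_dvd (x i) N)
    _ ↔ ∃ z, x = N • z := by
        simp only [dvd_def, Classical.skolem, funext_iff, ← natCast_zsmul,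
          Pi.smul_apply, smul_eq_mul]

lemma intCastVec_single [DecidableEq ι] (j : ι) (a : ℤ) :
    intCastVec R (Pi.single j a) = Pi.single j (a : R) :=
  funext fun i => Pi.apply_single (fun _ => (Int.cast : ℤ → R)) (fun _ => Int.cast_zero) j a i

lemma map_intCast_pow_mulVec_intCastVec [Fintype ι] [DecidableEq ι] (A : Matrix ι ι ℤ) (k : ℕ)
    (x : ι → ℤ) :
    A.map (Int.cast : ℤ → R) ^ k *ᵥ intCastVec R x = intCastVec R (A ^ k *ᵥ x) := by
  change A.map (Int.castRingHom R) ^ k *ᵥ _ = _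
  rw [← Matrix.map_pow]
  exact funext fun i => ((Int.castRingHom R).map_mulVec (A ^ k) x i).symm

end IntCastVec

section GA

variable {n : ℕ} (A : Matrix (Fin n) (Fin n) ℤ)

lemma det_Aq : (Aq A).det = A.det :=
  ((Int.castRingHom ℚ).map_det A).symm

lemma Aq_pow_mulVec_intCastVec (k : ℕ) (x : Fin n → ℤ) :
    Aq A ^ k *ᵥ intCastVec ℚ x = intCastVec ℚ (A ^ k *ᵥ x) :=
  map_intCast_pow_mulVec_intCastVec ℚ A k x

/-- `G_A` as an additive subgroup of `ℚ^n`, described without negative powers of `A`. -/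
def GASubgroup : AddSubgroup (Fin n → ℚ) where
  carrier := {v | ∃ (k : ℕ) (x : Fin n → ℤ), Aq A ^ k *ᵥ v = intCastVec ℚ x}
  zero_mem' := ⟨0, 0, by rw [mulVec_zero, map_zero]⟩
  add_mem' := by
    rintro v w ⟨k, x, hx⟩ ⟨l, y, hy⟩
    refine ⟨k + l, A ^ l *ᵥ x + A ^ k *ᵥ y, ?_⟩
    rw [mulVec_add, map_add, ← Aq_pow_mulVec_intCastVec, ← Aq_pow_mulVec_intCastVec, ← hx, ← hy,
      mulVec_mulVec, mulVec_mulVec, ← pow_add, ← pow_add, add_comm l k]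
  neg_mem' := by
    rintro v ⟨k, x, hx⟩
    exact ⟨k, -x, by rw [mulVec_neg, hx, map_neg]⟩

lemma intCastVec_mem_GASubgroup (x : Fin n → ℤ) : intCastVec ℚ x ∈ GASubgroup A :=
  ⟨0, x, by rw [pow_zero, one_mulVec]⟩

variable {A} in
lemma coe_GASubgroup (hA : A.det ≠ 0) : (GASubgroup A : Set (Fin n → ℚ)) = GA A := by
  have hdet : IsUnit (Aq A).det := by
    rw [det_Aq]
    exact (Int.cast_ne_zero.2 hA).isUnit
  have hneg (k : ℕ) (v : Fin n → ℚ) : Aq A ^ (-(k : ℤ)) *ᵥ (Aq A ^ k *ᵥ v) = v := by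
    rw [mulVec_mulVec, ← zpow_natCast, ← Matrix.zpow_add hdet, neg_add_cancel, zpow_zero,
      one_mulVec]
  ext v
  constructor
  · rintro ⟨k, x, hx⟩
    exact ⟨-(k : ℤ), x, (hx ▸ hneg k v).symm⟩
  · rintro ⟨k, x, rfl⟩
    change _ *ᵥ intCastVec ℚ x ∈ GASubgroup A
    obtain ⟨m, rfl | rfl⟩ := k.eq_nat_or_neg
    · rw [zpow_natCast, Aq_pow_mulVec_intCastVec]
      exact intCastVec_mem_GASubgroup A _
    · refine ⟨m, x, ?_⟩
      rw [mulVec_mulVec, ← zpow_natCast, ← Matrix.zpow_add hdet, add_neg_cancel, zpow_zero,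
        one_mulVec]

lemma mapsTo_Aq_GASubgroup : Set.MapsTo (toLin' (Aq A)) (GASubgroup A) (GASubgroup A) := by
  rintro v ⟨k, x, hx⟩
  refine ⟨k, A ^ 1 *ᵥ x, ?_⟩
  rw [toLin'_apply, ← Aq_pow_mulVec_intCastVec, ← hx, mulVec_mulVec, mulVec_mulVec, pow_one,
    ← pow_succ, ← pow_succ']

/-- The vectors modulo `N` annihilated by a power of `A`. -/
def nilSubmodule (N : ℕ) : Submodule (ZMod N) (Fin n → ZMod N) :=
  Module.End.maxGenEigenspace (toLin' (A.map (Int.cast : ℤ → ZMod N))) 0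

lemma mem_nilSubmodule {N : ℕ} {y : Fin n → ZMod N} :
    y ∈ nilSubmodule A N ↔ ∃ k : ℕ, A.map (Int.cast : ℤ → ZMod N) ^ k *ᵥ y = 0 := by
  simp only [nilSubmodule, Module.End.mem_maxGenEigenspace, zero_smul, sub_zero, ← toLin'_pow,
    toLin'_apply]

variable {N : ℕ}

lemma mem_range_nsmul_GASubgroup (hN : N ≠ 0) {g : GASubgroup A} :
    g ∈ (nsmulAddMonoidHom (α := GASubgroup A) N).range ↔
      ∃ (k : ℕ) (z : Fin n → ℤ), Aq A ^ k *ᵥ (g : Fin n → ℚ) = intCastVec ℚ (N • z) := by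
  have hN' : (N : ℚ) ≠ 0 := Nat.cast_ne_zero.2 hN
  constructor
  · rintro ⟨⟨w, k, z, hz⟩, rfl⟩
    refine ⟨k, z, ?_⟩
    rw [map_nsmul, ← hz]
    exact mulVec_smul (Aq A ^ k) N w
  · rintro ⟨k, z, hz⟩
    refine ⟨⟨(N : ℚ)⁻¹ • (g : Fin n → ℚ), k, z, ?_⟩, Subtype.ext ?_⟩
    · rw [mulVec_smul, hz, map_nsmul, ← Nat.cast_smul_eq_nsmul ℚ, inv_smul_smul₀ hN']
    · change N • ((N : ℚ)⁻¹ • (g : Fin n → ℚ)) = g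
      rw [← Nat.cast_smul_eq_nsmul ℚ, smul_inv_smul₀ hN']

/-- The standard lattice `ℤ^n` inside `G_A`. -/
def latticeHom : (Fin n → ℤ) →+ GASubgroup A :=
  (intCastVec ℚ).codRestrict (GASubgroup A) (intCastVec_mem_GASubgroup A)

lemma comap_latticeHom_range_nsmul (hN : N ≠ 0) :
    (nsmulAddMonoidHom (α := GASubgroup A) N).range.comap (latticeHom A) =
      (nilSubmodule A N).toAddSubgroup.comap (intCastVec (ZMod N)) := by
  ext x
  rw [AddSubgroup.mem_comap, mem_range_nsmul_GASubgroup A hN, AddSubgroup.mem_comap,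
    Submodule.mem_toAddSubgroup, mem_nilSubmodule]
  refine exists_congr fun k => ?_
  rw [map_intCast_pow_mulVec_intCastVec, intCastVec_zmod_eq_zero_iff]
  refine exists_congr fun z => ?_
  change Aq A ^ k *ᵥ intCastVec ℚ x = _ ↔ _
  rw [Aq_pow_mulVec_intCastVec, (intCastVec_injective ℚ).eq_iff]

/-- The images of the powers of `A` modulo `N` stabilise, so that, modulo `N`, division by `A ^ k`
is possible after applying a high power of `A`. -/
lemma range_latticeHom_sup_range_nsmul (hN : N ≠ 0) :
    (latticeHom A).range ⊔ (nsmulAddMonoidHom (α := GASubgroup A) N).range = ⊤ := by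
  have : NeZero N := ⟨hN⟩
  refine (AddSubgroup.eq_top_iff' _).2 fun g => ?_
  obtain ⟨k, x, hx⟩ := g.2
  let B := A.map (Int.cast : ℤ → ZMod N)
  obtain ⟨m, hm⟩ := IsArtinian.monotone_stabilizes (toLin' B).iterateRange
  have hstab : (toLin' B ^ m).range = (toLin' B ^ (m + k)).range := hm (m + k) (m.le_add_right k)
  obtain ⟨y', hy'⟩ := hstab.le ⟨intCastVec (ZMod N) x, rfl⟩
  obtain ⟨y, rfl⟩ := intCastVec_zmod_surjective N y'
  rw [← toLin'_pow, ← toLin'_pow, toLin'_apply, toLin'_apply, map_intCast_pow_mulVec_intCastVec,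
    map_intCast_pow_mulVec_intCastVec] at hy'
  obtain ⟨z, hz⟩ := intCastVec_zmod_eq_zero_iff.1
    ((map_sub (intCastVec (ZMod N)) _ _).trans (sub_eq_zero.2 hy'.symm))
  have hmem : g - latticeHom A y ∈ (nsmulAddMonoidHom (α := GASubgroup A) N).range := by
    refine (mem_range_nsmul_GASubgroup A hN).2 ⟨m + k, z, ?_⟩
    change Aq A ^ (m + k) *ᵥ ((g : Fin n → ℚ) - intCastVec ℚ y) = _
    rw [← hz, mulVec_sub, Aq_pow_mulVec_intCastVec, pow_add (Aq A), ← mulVec_mulVec, hx,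
      Aq_pow_mulVec_intCastVec, map_sub]
  rw [← add_sub_cancel (latticeHom A y) g]
  exact AddSubgroup.add_mem_sup ⟨y, rfl⟩ hmem

theorem nsmulIndex_GASubgroup (hN : N ≠ 0) :
    nsmulIndex (GASubgroup A) N = (nilSubmodule A N).toAddSubgroup.index :=
  let P := (nsmulAddMonoidHom (α := GASubgroup A) N).range
  calc P.index = P.relIndex ((latticeHom A).range ⊔ P) := by
        rw [range_latticeHom_sup_range_nsmul A hN, AddSubgroup.relIndex_top_right]
    _ = (P.comap (latticeHom A)).index := by
        rw [AddSubgroup.relIndex_sup_right, AddSubgroup.index_comap]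
    _ = (nilSubmodule A N).toAddSubgroup.index := by
        rw [comap_latticeHom_range_nsmul A hN,
          AddSubgroup.index_comap_of_surjective _ (intCastVec_zmod_surjective N)]

lemma nsmulIndex_GASubgroup_ne_zero (hN : N ≠ 0) : nsmulIndex (GASubgroup A) N ≠ 0 := by
  have : NeZero N := ⟨hN⟩
  rw [nsmulIndex_GASubgroup A hN]
  exact AddSubgroup.FiniteIndex.index_ne_zero

lemma exists_nsmulIndex_GASubgroup_eq_pow {p : ℕ} (hp : p.Prime) :
    ∃ s, nsmulIndex (GASubgroup A) p = p ^ s ∧ s + tp A p = n := by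
  have : Fact p.Prime := ⟨hp⟩
  refine ⟨Module.finrank (ZMod p) ((Fin n → ZMod p) ⧸ nilSubmodule A p), ?_, ?_⟩
  · calc nsmulIndex (GASubgroup A) p = Nat.card ((Fin n → ZMod p) ⧸ nilSubmodule A p) :=
          nsmulIndex_GASubgroup A hp.ne_zero
      _ = _ := by rw [Module.natCard_eq_pow_finrank (K := ZMod p), Nat.card_zmod]
  · have hnil : Module.finrank (ZMod p) (nilSubmodule A p) = tp A p := by
      rw [nilSubmodule, LinearMap.finrank_maxGenEigenspace_zero_eq, charpoly_toLin',
        ← rootMultiplicity_eq_natTrailingDegree', tp, ← Matrix.charpoly_map]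
      rfl
    rw [← hnil, Submodule.finrank_quotient_add_finrank, Module.finrank_fin_fun]

end GA

section Automorphisms

open scoped Pointwise

variable {n : ℕ} {A : Matrix (Fin n) (Fin n) ℤ}

/-- If `A ^ k v` is integral, then so is `det A ^ k v`, by Cramer's rule for `A ^ k`. -/
lemma eventually_det_pow_smul_mem_range {v : Fin n → ℚ} (hv : v ∈ GASubgroup A) :
    ∀ᶠ r in Filter.atTop, (A.det : ℚ) ^ r • v ∈ (intCastVec (ι := Fin n) ℚ).range := by
  obtain ⟨k, x, hx⟩ := hv
  have hpow : Aq A ^ k = (Int.castRingHom ℚ).mapMatrix (A ^ k) :=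
    (map_pow (Int.castRingHom ℚ).mapMatrix A k).symm
  have hcramer : intCastVec ℚ ((A ^ k).adjugate *ᵥ x) = (A.det : ℚ) ^ k • v :=
    calc intCastVec ℚ ((A ^ k).adjugate *ᵥ x)
        = (Aq A ^ k).adjugate *ᵥ intCastVec ℚ x := by
          rw [hpow, ← RingHom.map_adjugate]
          exact funext fun i => (Int.castRingHom ℚ).map_mulVec _ x i
      _ = (A.det : ℚ) ^ k • v := by
          rw [← hx, mulVec_mulVec, adjugate_mul, det_pow, det_Aq, smul_mulVec, one_mulVec]
  filter_upwards [Filter.eventually_ge_atTop k] with r hr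
  refine ⟨A.det ^ (r - k) • (A ^ k).adjugate *ᵥ x, ?_⟩
  rw [map_zsmul, hcramer, ← Int.cast_smul_eq_zsmul ℚ, smul_smul, Int.cast_pow,
    pow_sub_mul_pow _ hr]

lemma exists_isIntegral_det_pow_mul {T : Matrix (Fin n) (Fin n) ℚ}
    (hT : Set.MapsTo (toLin' T) (GASubgroup A) (GASubgroup A)) :
    ∃ r : ℕ, IsIntegral ℤ ((A.det : Matrix (Fin n) (Fin n) ℚ) ^ r * T) := by
  have hcol (j : Fin n) : T.col j ∈ GASubgroup A := by
    have := hT (intCastVec_mem_GASubgroup A (Pi.single j 1))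
    rwa [intCastVec_single, Int.cast_one, toLin'_apply, mulVec_single_one] at this
  obtain ⟨r, hr⟩ :=
    (Filter.eventually_all.2 fun j => eventually_det_pow_smul_mem_range (hcol j)).exists
  choose x hx using hr
  refine ⟨r, ?_⟩
  have hB : (A.det : Matrix (Fin n) (Fin n) ℚ) ^ r * T =
      (Algebra.ofId ℤ ℚ).mapMatrix (Matrix.of x)ᵀ := by
    rw [← Int.cast_pow, ← zsmul_eq_mul, ← Int.cast_smul_eq_zsmul ℚ, Int.cast_pow]
    exact Matrix.ext fun i j => (congrFun (hx j) i).symm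
  rw [hB]
  exact (Matrix.isIntegral _).map _

lemma charpoly_toLin'_Aq (A : Matrix (Fin n) (Fin n) ℤ) :
    (toLin' (Aq A)).charpoly = A.charpoly.map (Int.castRingHom ℚ) := by
  rw [charpoly_toLin', ← Matrix.charpoly_map]
  rfl

theorem commute_of_mapsTo_GASubgroup (hirr : Irreducible (A.charpoly.map (Int.castRingHom ℚ)))
    (hcop : ∃ p : ℕ, p.Prime ∧ Nat.gcd n (tp A p) = 1) {S T : Matrix (Fin n) (Fin n) ℚ}
    (hS : Set.MapsTo (toLin' S) (GASubgroup A) (GASubgroup A))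
    (hT : Set.MapsTo (toLin' T) (GASubgroup A) (GASubgroup A)) : Commute S T := by
  obtain ⟨p, hp, hnt⟩ := hcop
  obtain ⟨s, hs, hst⟩ := exists_nsmulIndex_GASubgroup_eq_pow A hp
  have hts : (tp A p).Coprime s := by
    rw [Nat.coprime_comm, ← Nat.coprime_add_self_left, hst]
    exact hnt
  have hns : (Module.finrank ℚ (Fin n → ℚ)).Coprime s := by
    rwa [Module.finrank_fin_fun, ← hst, Nat.coprime_self_add_left]
  refine toLinAlgEquiv'.injective ?_
  rw [map_mul, map_mul]
  exact commute_of_mem_quasiEnd (fun N => nsmulIndex_GASubgroup_ne_zero A) hp hs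
    ((charpoly_toLin'_Aq A).symm ▸ hirr) (mem_quasiEnd_of_mapsTo (mapsTo_Aq_GASubgroup A)) hns
    (mem_quasiEnd_of_mapsTo hS) (mem_quasiEnd_of_mapsTo hT)

/-- `Aut(G_A)` as a group of matrices. -/
def autGA (A : Matrix (Fin n) (Fin n) ℤ) : Subgroup (Matrix (Fin n) (Fin n) ℚ)ˣ :=
  (MulAction.stabilizer (Module.End ℚ (Fin n → ℚ))ˣ (GA A)).comap
    (Units.map (toLinAlgEquiv' (R := ℚ) (n := Fin n)).toAlgHom.toMonoidHom)

lemma mem_autGA {T : (Matrix (Fin n) (Fin n) ℚ)ˣ} :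
    T ∈ autGA A ↔ (fun w => (T : Matrix (Fin n) (Fin n) ℚ) *ᵥ w) '' GA A = GA A :=
  Iff.rfl

lemma mapsTo_of_mem_autGA (hA : A.det ≠ 0) {T : (Matrix (Fin n) (Fin n) ℚ)ˣ} (hT : T ∈ autGA A) :
    Set.MapsTo (toLin' (T : Matrix (Fin n) (Fin n) ℚ)) (GASubgroup A) (GASubgroup A) := by
  rw [coe_GASubgroup hA]
  exact Set.mapsTo_iff_image_subset.2 (mem_autGA.1 hT).le

theorem fg_autGA (hA : A.det ≠ 0) (hirr : Irreducible (A.charpoly.map (Int.castRingHom ℚ)))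
    (hcomm : ∀ T ∈ autGA A, Commute (T : Matrix (Fin n) (Fin n) ℚ) (Aq A)) :
    Group.FG (autGA A) := by
  obtain _ | _ := subsingleton_or_nontrivial (Matrix (Fin n) (Fin n) ℚ)
  · infer_instance
  let a := toLin' (Aq A)
  have hirr' : Irreducible a.charpoly := (charpoly_toLin'_Aq A).symm ▸ hirr
  have : Fact (Irreducible a.charpoly) := ⟨hirr'⟩
  have := (AdjoinRoot.powerBasis hirr'.ne_zero).finite
  have : NumberField (AdjoinRoot a.charpoly) :=
    { to_charZero := charZero_of_injective_algebraMap
        (algebraMap ℚ (AdjoinRoot a.charpoly)).injective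
      to_finiteDimensional := by convert this }
  let ψ := (LinearMap.toMatrixAlgEquiv' (R := ℚ) (n := Fin n)).toAlgHom.comp (aevalAdjoinRoot a)
  refine fg_units_of_le_range_of_isIntegral_pow_mul ψ.toRingHom hA (fun T hT => ?_)
    fun T hT => exists_isIntegral_det_pow_mul (mapsTo_of_mem_autGA hA hT)
  obtain ⟨c, hc⟩ := mem_range_aevalAdjoinRoot_of_commute hirr' ((hcomm T hT).map toLinAlgEquiv')
  exact ⟨c, (congrArg LinearMap.toMatrixAlgEquiv' hc).trans (LinearMap.toMatrix'_toLin' _)⟩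

end Automorphisms

/-- `End(G_A)` is commutative and `Aut(G_A)` is a finitely generated
abelian group. -/
theorem stmt9 (n : ℕ) (A : Matrix (Fin n) (Fin n) ℤ) (hA : A.det ≠ 0)
    (hirr : Irreducible (A.charpoly.map (Int.castRingHom ℚ)))
    (hP' : (Pbad A).Nonempty)
    (hcop : ∃ p : ℕ, p.Prime ∧ Nat.gcd n (tp A p) = 1) :
    ((∀ S T : Matrix (Fin n) (Fin n) ℚ,
        (∀ v ∈ GA A, S *ᵥ v ∈ GA A) → (∀ v ∈ GA A, T *ᵥ v ∈ GA A) →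
        S * T = T * S) ∧
      ∃ H : Subgroup (Matrix (Fin n) (Fin n) ℚ)ˣ,
        (∀ T : (Matrix (Fin n) (Fin n) ℚ)ˣ,
          T ∈ H ↔ (fun w => (T : Matrix (Fin n) (Fin n) ℚ) *ᵥ w) '' GA A = GA A) ∧
        (∀ a b : H, a * b = b * a) ∧ Group.FG H) := by
  refine ⟨fun S T hS hT => ?_, autGA A, fun T => mem_autGA, fun S T => ?_, ?_⟩
  · rw [← coe_GASubgroup hA] at hS hT
    exact commute_of_mapsTo_GASubgroup hirr hcop hS hT
  · exact Subtype.ext <| Units.ext <| commute_of_mapsTo_GASubgroup hirr hcop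
      (mapsTo_of_mem_autGA hA S.2) (mapsTo_of_mem_autGA hA T.2)
  · exact fg_autGA hA hirr fun T hT => commute_of_mapsTo_GASubgroup hirr hcop
      (mapsTo_of_mem_autGA hA hT) (mapsTo_Aq_GASubgroup A)
end
end
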